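/- arXiv:1504.08282 — 2 statements merged into one kernel-verified Lean document; each statement's English description precedes it below -/
import Mathlib

section
/- Let Λ be an artin algebra, P the class of finitely generated right Λ-modules of finite projective dimension, and let E be a finitely generated Λ-module with every indecomposable summand Ext-injective in P (so E ∈ P^⊥ ∩ P). If E is a tilting module, then E^⊥ = P^⊥. -/
open CategoryTheory

universe u

/-- The `n`-th Ext group of `A`-modules `M`, `N`. -/
noncomputable abbrev ext {A : Type u} [Ring A] (M N : ModuleCat.{u} A) (n : ℕ) : Type u :=
  ((Ext ℤ (ModuleCat.{u} A) n).obj (Opposite.op M)).obj N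

/-- `Ext^i(N, M) = 0` for all `i > 0`. -/
def ExtVanish {A : Type u} [Ring A] (N M : ModuleCat.{u} A) : Prop :=
  ∀ i, 0 < i → Subsingleton (ext N M i)

/-- `M` has projective dimension at most `n`, i.e. `Ext^i(M, -) = 0` for `i > n`. -/
def pdLE {A : Type u} [Ring A] (M : ModuleCat.{u} A) (n : ℕ) : Prop :=
  ∀ i, n < i → ∀ N : ModuleCat.{u} A, Subsingleton (ext M N i)

/-- The projective dimension of `M`, as an element of `ℕ∞` (`⊤` if infinite). -/
noncomputable def projDim {A : Type u} [Ring A] (M : ModuleCat.{u} A) : ℕ∞ :=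
  sInf {d : ℕ∞ | ∃ n : ℕ, d = n ∧ pdLE M n}

/-- Membership in `𝒫`: finitely generated of finite projective dimension. -/
def InP {A : Type u} [Ring A] (M : ModuleCat.{u} A) : Prop :=
  Module.Finite A M ∧ ∃ n, pdLE M n

/-- The finitistic dimension of `A`. -/
noncomputable def findim (A : Type u) [Ring A] : ℕ∞ :=
  sSup {d : ℕ∞ | ∃ M : ModuleCat.{u} A, InP M ∧ d = projDim M}

/-- `M` is a direct summand of `S`. -/
def IsSummand {A : Type u} [Ring A] (M S : ModuleCat.{u} A) : Prop :=
  ∃ (s : M →ₗ[A] S) (r : S →ₗ[A] M), r ∘ₗ s = LinearMap.id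

/-- `M` belongs to `add 𝒳`: `M` is a direct summand of a finite direct sum of objects of `𝒳`. -/
def InAddOf {A : Type u} [Ring A] (X : ModuleCat.{u} A → Prop) (M : ModuleCat.{u} A) : Prop :=
  ∃ (k : ℕ) (F : Fin k → ModuleCat.{u} A), (∀ i, X (F i)) ∧
    IsSummand M (ModuleCat.of A (DirectSum (Fin k) (fun i => ↥(F i))))

/-- `M` belongs to `Add T`: `M` is a direct summand of an arbitrary direct sum of copies of `T`. -/
def InAdd {A : Type u} [Ring A] (T M : ModuleCat.{u} A) : Prop :=
  ∃ ι : Type u, IsSummand M (ModuleCat.of A (DirectSum ι (fun _ => ↥T)))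

/-- `M ∈ 𝒳^⊥`: `Ext^i(N, M) = 0` for all `N ∈ 𝒳` and `i > 0`. -/
def InPerpOf {A : Type u} [Ring A] (X : ModuleCat.{u} A → Prop) (M : ModuleCat.{u} A) : Prop :=
  ∀ N, X N → ExtVanish N M

/-- `M` is Ext-injective in `𝒫`: `M ∈ 𝒫` and `Ext^1(N, M) = 0` for all `N ∈ 𝒫`. -/
def ExtInjInP {A : Type u} [Ring A] (M : ModuleCat.{u} A) : Prop :=
  InP M ∧ ∀ N : ModuleCat.{u} A, InP N → Subsingleton (ext N M 1)

/-- `M` is splitting injective in `𝒳`: every injective map `M → Y` with `Y ∈ add 𝒳` splits. -/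
def SplittingInjIn {A : Type u} [Ring A] (X : ModuleCat.{u} A → Prop)
    (M : ModuleCat.{u} A) : Prop :=
  ∀ Y : ModuleCat.{u} A, InAddOf X Y → ∀ f : M →ₗ[A] Y, Function.Injective f →
    ∃ r : Y →ₗ[A] M, r ∘ₗ f = LinearMap.id

/-- `0 → M₁ → M₂ → M₃ → 0` is a short exact sequence. -/
def ShortExact {A : Type u} [Ring A] {M₁ M₂ M₃ : ModuleCat.{u} A}
    (f : M₁ →ₗ[A] M₂) (g : M₂ →ₗ[A] M₃) : Prop :=
  Function.Injective f ∧ Function.Exact f g ∧ Function.Surjective g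

/-- `f : XM → M` is a right `𝒳`-approximation of `M`. -/
def IsRightApprox {A : Type u} [Ring A] (X : ModuleCat.{u} A → Prop)
    {XM M : ModuleCat.{u} A} (f : XM →ₗ[A] M) : Prop :=
  X XM ∧ ∀ Y : ModuleCat.{u} A, X Y → ∀ g : Y →ₗ[A] M, ∃ h : Y →ₗ[A] XM, f ∘ₗ h = g

/-- `f : XM → M` is a minimal right `𝒳`-approximation. -/
def IsMinimalRightApprox {A : Type u} [Ring A] (X : ModuleCat.{u} A → Prop)
    {XM M : ModuleCat.{u} A} (f : XM →ₗ[A] M) : Prop :=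
  IsRightApprox X f ∧ ∀ g : XM →ₗ[A] XM, f ∘ₗ g = f → Function.Bijective g

/-- `𝒳` is contravariantly finite in `mod A`. -/
def ContravariantlyFinite {A : Type u} [Ring A] (X : ModuleCat.{u} A → Prop) : Prop :=
  ∀ M : ModuleCat.{u} A, Module.Finite A M →
    ∃ (XM : ModuleCat.{u} A) (f : XM →ₗ[A] M), IsRightApprox X f

/-- `M` is an indecomposable module: nonzero, and its only idempotent endomorphisms
are `0` and the identity. -/
def Indec {A : Type u} [Ring A] (M : ModuleCat.{u} A) : Prop :=
  (¬ Subsingleton M) ∧ ∀ e : M →ₗ[A] M, e ∘ₗ e = e → e = 0 ∨ e = LinearMap.id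

/-- `L` admits a finite coresolution `0 → L → C^0 → ⋯ → C^n → 0` with all `C^i ∈ add T`. -/
def HasAddCoresolution {A : Type u} [Ring A] (T L : ModuleCat.{u} A) : Prop :=
  ∃ (C : ℕ → ModuleCat.{u} A) (d : ∀ i, C i →ₗ[A] C (i+1)) (f : L →ₗ[A] C 0),
    Function.Injective f ∧ Function.Exact f (d 0) ∧
    (∀ i, Function.Exact (d i) (d (i+1))) ∧
    (∀ i, InAddOf (fun X => X = T) (C i)) ∧
    (∃ m, ∀ i, m ≤ i → Subsingleton (C i))

/-- `T` is a tilting `A`-module. -/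
def IsTilting {A : Type u} [Ring A] (T : ModuleCat.{u} A) : Prop :=
  Module.Finite A T ∧ (∃ n, pdLE T n) ∧ ExtVanish T T ∧
    HasAddCoresolution T (ModuleCat.of A A)

/-- `𝒳` is a resolving subcategory of `mod A`. -/
def Resolving {A : Type u} [Ring A] (X : ModuleCat.{u} A → Prop) : Prop :=
  (∀ M : ModuleCat.{u} A, Module.Finite A M → Module.Projective A M → X M) ∧
  (∀ (M₁ M₂ M₃ : ModuleCat.{u} A) (f : M₁ →ₗ[A] M₂) (g : M₂ →ₗ[A] M₃),
      ShortExact f g → X M₁ → X M₃ → X M₂) ∧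
  (∀ (M₁ M₂ M₃ : ModuleCat.{u} A) (f : M₁ →ₗ[A] M₂) (g : M₂ →ₗ[A] M₃),
      ShortExact f g → X M₂ → X M₃ → X M₁)

/-- `F` is a complete irredundant family of representatives of the isomorphism classes of
indecomposable Ext-injective modules in `𝒫`. -/
def IsCompleteExtInjFamily {A : Type u} [Ring A] {ι : Type u}
    (F : ι → ModuleCat.{u} A) : Prop :=
  (∀ i, Indec (F i) ∧ ExtInjInP (F i)) ∧
  (∀ M : ModuleCat.{u} A, Indec M → ExtInjInP M → ∃ i, Nonempty (M ≃ₗ[A] F i)) ∧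
  (∀ i j, Nonempty (F i ≃ₗ[A] F j) → i = j)

/-- `I` is a complete set of pairwise non-isomorphic indecomposable injective modules. -/
def IsCompleteIndecInjFamily {A : Type u} [Ring A] {n : ℕ}
    (I : Fin n → ModuleCat.{u} A) : Prop :=
  (∀ j, Module.Finite A (I j) ∧ Module.Injective A (I j) ∧ Indec (I j)) ∧
  (∀ M : ModuleCat.{u} A, Module.Finite A M → Module.Injective A M → Indec M →
      ∃ j, Nonempty (M ≃ₗ[A] I j)) ∧
  (∀ j k, Nonempty (I j ≃ₗ[A] I k) → j = k)

/-!
Let `M ∈ T^⊥`. Dimension shifting along the coresolution of `A` by `add T` extends every map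
`A → M` to the first term of the coresolution, so `M` is generated by `T` and the canonical map
`T^(Hom(T, M)) → M` is surjective. Since every map `T → M` factors through it and
`Ext^i(T, T^(I)) = 0`, its kernel lies in `T^⊥` again, and iterating gives an `Add T`-resolution
of `M`. If `T ∈ N^⊥`, dimension shifting along this resolution identifies `Ext^j(N, M)` with
`Ext^(j+k)(N, -)` of the `k`-th kernel, which is zero once `j + k` exceeds the projective
dimension of `N`. Noetherianity enters through `Ext^i(N, T^(I)) = 0`: the syzygies of `N` are
finitely generated, so a map from one of them to `T^(I)` has image in a finite subsum.
-/

open Abelian DirectSum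

universe v w

theorem forall_of_forall_ge_of_succ {P : ℕ → Prop} {n : ℕ} (h : ∀ k, n ≤ k → P k)
    (succ : ∀ k, P (k + 1) → P k) (k : ℕ) : P k :=
  Nat.decreasingInduction' (fun i _ _ => succ i) (le_max_left k n) (h _ (le_max_right k n))

section AbelianCategory

variable {C : Type v} [Category.{w} C] [Abelian C] [HasExt.{w} C] {S : ShortComplex C}

theorem contravariant_subsingleton_ext_X₁ (hS : S.ShortExact) {Y : C} {n : ℕ}
    (h₂ : Subsingleton (Abelian.Ext S.X₂ Y n)) (h₃ : Subsingleton (Abelian.Ext S.X₃ Y (n + 1))) :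
    Subsingleton (Abelian.Ext S.X₁ Y n) := by
  refine subsingleton_of_forall_eq 0 fun x => ?_
  obtain ⟨y, rfl⟩ := Ext.contravariant_sequence_exact₁ hS Y x (add_comm 1 n)
    (Subsingleton.elim _ _)
  rw [Subsingleton.elim y 0, Ext.comp_zero]

theorem covariant_subsingleton_ext_X₁ (hS : S.ShortExact) {X : C} {n : ℕ}
    (h₃ : Subsingleton (Abelian.Ext X S.X₃ n)) (h₂ : Subsingleton (Abelian.Ext X S.X₂ (n + 1))) :
    Subsingleton (Abelian.Ext X S.X₁ (n + 1)) := by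
  refine subsingleton_of_forall_eq 0 fun x => ?_
  obtain ⟨y, rfl⟩ := Ext.covariant_sequence_exact₁ X hS x (Subsingleton.elim _ _) rfl
  rw [Subsingleton.elim y 0, Ext.zero_comp]

theorem covariant_subsingleton_ext_X₃ (hS : S.ShortExact) {X : C} {n : ℕ}
    (h₂ : Subsingleton (Abelian.Ext X S.X₂ n)) (h₁ : Subsingleton (Abelian.Ext X S.X₁ (n + 1))) :
    Subsingleton (Abelian.Ext X S.X₃ n) := by
  refine subsingleton_of_forall_eq 0 fun x => ?_
  obtain ⟨y, rfl⟩ := Ext.covariant_sequence_exact₃ X hS x rfl (Subsingleton.elim _ _)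
  rw [Subsingleton.elim y 0, Ext.zero_comp]

theorem exists_extension_of_subsingleton_ext_one (hS : S.ShortExact) {Y : C}
    (h : Subsingleton (Abelian.Ext S.X₃ Y 1)) (φ : S.X₁ ⟶ Y) : ∃ ψ : S.X₂ ⟶ Y, S.f ≫ ψ = φ := by
  obtain ⟨y, hy⟩ := Ext.contravariant_sequence_exact₁ hS Y (Ext.mk₀ φ) (add_zero 1)
    (Subsingleton.elim _ _)
  obtain ⟨ψ, rfl⟩ := (Ext.mk₀_bijective _ _).surjective y
  exact ⟨ψ, (Ext.mk₀_bijective _ _).injective (by rw [← hy, Ext.mk₀_comp_mk₀])⟩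

theorem subsingleton_ext_one_of_exists_extension (hS : S.ShortExact) [Projective S.X₂] {Y : C}
    (h : ∀ φ : S.X₁ ⟶ Y, ∃ ψ : S.X₂ ⟶ Y, S.f ≫ ψ = φ) :
    Subsingleton (Abelian.Ext S.X₃ Y 1) := by
  refine subsingleton_of_forall_eq 0 fun x => ?_
  obtain ⟨y, rfl⟩ := Ext.contravariant_sequence_exact₃ hS Y x (Ext.eq_zero_of_projective _)
    (add_zero 1)
  obtain ⟨φ, rfl⟩ := (Ext.mk₀_bijective _ _).surjective y
  obtain ⟨ψ, rfl⟩ := h φ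
  rw [← Ext.mk₀_comp_mk₀, hS.extClass_comp_assoc]

theorem subsingleton_ext_one_of_exists_lift (hS : S.ShortExact) {X : C}
    (h₂ : Subsingleton (Abelian.Ext X S.X₂ 1))
    (h : ∀ φ : X ⟶ S.X₃, ∃ ψ : X ⟶ S.X₂, ψ ≫ S.g = φ) :
    Subsingleton (Abelian.Ext X S.X₁ 1) := by
  refine subsingleton_of_forall_eq 0 fun x => ?_
  obtain ⟨y, rfl⟩ := Ext.covariant_sequence_exact₁ X hS x (Subsingleton.elim _ _) (zero_add 1)
  obtain ⟨φ, rfl⟩ := (Ext.mk₀_bijective _ _).surjective y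
  obtain ⟨ψ, rfl⟩ := h φ
  rw [← Ext.mk₀_comp_mk₀, Ext.comp_assoc_of_second_deg_zero, hS.comp_extClass, Ext.comp_zero]

theorem subsingleton_ext_of_sum_comp_eq_id {ι : Type*} [Fintype ι] {X T Y : C} {n : ℕ}
    {p : ι → (X ⟶ T)} {q : ι → (T ⟶ X)} (hpq : ∑ i, p i ≫ q i = 𝟙 X)
    (h : Subsingleton (Abelian.Ext T Y n)) : Subsingleton (Abelian.Ext X Y n) := by
  refine subsingleton_of_forall_eq 0 fun x => ?_
  have factor_eq_zero (i : ι) : (Ext.mk₀ (p i ≫ q i)).comp x (zero_add n) = 0 := by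
    rw [← Ext.mk₀_comp_mk₀_assoc, Subsingleton.elim ((Ext.mk₀ (q i)).comp x _) 0, Ext.comp_zero]
  rw [← Ext.mk₀_id_comp x, ← hpq, Ext.mk₀_sum, Ext.sum_comp]
  exact Finset.sum_eq_zero fun i _ => factor_eq_zero i

end AbelianCategory

section Modules

variable {A : Type v} [Ring A]

/-- `ext` is computed from a projective resolution, `Abelian.Ext` in the derived category: in
positive degrees, each of them vanishes if and only if every cocycle of maps from a projective
resolution of `N` to `M` is a coboundary. -/
theorem subsingleton_ext_iff (N M : ModuleCat.{v} A) (i : ℕ) :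
    Subsingleton (ext N M (i + 1)) ↔ Subsingleton (Abelian.Ext N M (i + 1)) := by
  let P := projectiveResolution N
  have ext_iff : Subsingleton (ext N M (i + 1)) ↔
      ∀ f : P.complex.X (i + 1) ⟶ M, P.complex.d (i + 2) (i + 1) ≫ f = 0 →
        ∃ g : P.complex.X i ⟶ M, P.complex.d (i + 1) i ≫ g = f := by
    rw [← ModuleCat.isZero_iff_subsingleton, (P.isoExt (i + 1) M).isZero_iff,
      ← HomologicalComplex.exactAt_iff_isZero_homology,
      HomologicalComplex.exactAt_iff' _ i (i + 1) (i + 2) (by simp) (by simp),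
      ShortComplex.moduleCat_exact_iff]
    rfl
  rw [ext_iff]
  constructor
  · intro h
    refine subsingleton_of_forall_eq 0 fun α => ?_
    obtain ⟨f, hf, rfl⟩ := P.extMk_surjective α (i + 2) rfl
    exact (P.extMk_eq_zero_iff f (i + 2) rfl hf i rfl).2 (h f hf)
  · intro h f hf
    exact (P.extMk_eq_zero_iff f (i + 2) rfl hf i rfl).1 (Subsingleton.elim _ _)

theorem extVanish_iff {N M : ModuleCat.{v} A} :
    ExtVanish N M ↔ ∀ i, Subsingleton (Abelian.Ext N M (i + 1)) := by
  refine ⟨fun h i => (subsingleton_ext_iff N M i).1 (h _ i.succ_pos), fun h i hi => ?_⟩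
  obtain ⟨j, rfl⟩ := Nat.exists_eq_add_one_of_ne_zero hi.ne'
  exact (subsingleton_ext_iff N M j).2 (h j)

theorem exists_finset_sum_lof_comp_component_comp_eq {K : Type*} [AddCommGroup K] [Module A K]
    [Module.Finite A K] {ι : Type*} [DecidableEq ι] {F : ι → Type*} [∀ k, AddCommGroup (F k)]
    [∀ k, Module A (F k)] (φ : K →ₗ[A] ⨁ k, F k) :
    ∃ s : Finset ι, ∑ k ∈ s, lof A ι F k ∘ₗ component A ι F k ∘ₗ φ = φ := by
  classical
  obtain ⟨G, hG⟩ := Module.Finite.fg_top (R := A) (M := K)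
  refine ⟨G.biUnion fun x => (φ x).support, LinearMap.ext_on hG fun x hx => ?_⟩
  have support_subset := Finset.subset_biUnion_of_mem (fun x => (φ x).support) hx
  calc (∑ k ∈ _, lof A ι F k ∘ₗ component A ι F k ∘ₗ φ) x
      = ∑ k ∈ _, lof A ι F k (φ x k) := LinearMap.sum_apply _ _ _
    _ = ∑ k ∈ (φ x).support, lof A ι F k (φ x k) :=
        (Finset.sum_subset support_subset fun k _ hk => by
          rw [DFinsupp.notMem_support_iff.1 hk, map_zero]).symm
    _ = φ x := sum_support_of (φ x)

theorem exists_extension_directSum {K P : Type*} [AddCommGroup K] [Module A K] [Module.Finite A K]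
    [AddCommGroup P] [Module A P] {ι : Type*} {F : ι → Type*} [∀ k, AddCommGroup (F k)]
    [∀ k, Module A (F k)] (j : K →ₗ[A] P) (φ : K →ₗ[A] ⨁ k, F k)
    (h : ∀ k, ∃ ψ : P →ₗ[A] F k, ψ ∘ₗ j = component A ι F k ∘ₗ φ) :
    ∃ ψ : P →ₗ[A] ⨁ k, F k, ψ ∘ₗ j = φ := by
  classical
  choose ψ hψ using h
  obtain ⟨s, hs⟩ := exists_finset_sum_lof_comp_component_comp_eq φ
  refine ⟨∑ k ∈ s, lof A ι F k ∘ₗ ψ k, LinearMap.ext fun x => ?_⟩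
  have hψx (k : ι) : ψ k (j x) = component A ι F k (φ x) := LinearMap.congr_fun (hψ k) x
  calc (∑ k ∈ s, lof A ι F k ∘ₗ ψ k) (j x)
      = (∑ k ∈ s, lof A ι F k ∘ₗ component A ι F k ∘ₗ φ) x := by
        simp only [LinearMap.sum_apply, LinearMap.comp_apply, hψx]
    _ = φ x := LinearMap.congr_fun hs x

theorem subsingleton_ext_directSum [IsNoetherianRing A] {ι : Type v} {F : ι → ModuleCat.{v} A}
    (N : ModuleCat.{v} A) [Module.Finite A N] (i : ℕ)
    (h : ∀ k, Subsingleton (Abelian.Ext N (F k) (i + 1))) :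
    Subsingleton (Abelian.Ext N (ModuleCat.of A (⨁ k, F k)) (i + 1)) := by
  induction i generalizing N with
  | zero =>
    obtain ⟨n, f, hf⟩ := Module.Finite.exists_fin' A N
    have hS := LinearMap.shortExact_shortComplexKer hf
    refine subsingleton_ext_one_of_exists_extension hS fun φ => ?_
    obtain ⟨ψ, hψ⟩ := exists_extension_directSum (LinearMap.ker f).subtype φ.hom fun k => by
      obtain ⟨ψ, hψ⟩ := exists_extension_of_subsingleton_ext_one hS (h k)
        (ModuleCat.ofHom (component A ι (fun k => F k) k ∘ₗ φ.hom))
      exact ⟨ψ.hom, congrArg ModuleCat.Hom.hom hψ⟩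
    exact ⟨ModuleCat.ofHom ψ, ModuleCat.hom_ext hψ⟩
  | succ i ih =>
    obtain ⟨n, f, hf⟩ := Module.Finite.exists_fin' A N
    have hS := LinearMap.shortExact_shortComplexKer hf
    have ext_ker (k : ι) :
        Subsingleton (Abelian.Ext (ModuleCat.of A (LinearMap.ker f)) (F k) (i + 1)) :=
      contravariant_subsingleton_ext_X₁ hS (Ext.subsingleton_of_projective _ _ _) (h k)
    have := ih _ ext_ker
    exact (precomp_extClass_surjective_of_projective_X₂ _ hS (i + 1)).subsingleton

theorem extVanish_directSum [IsNoetherianRing A] {ι : Type v} {F : ι → ModuleCat.{v} A}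
    {N : ModuleCat.{v} A} [Module.Finite A N] (h : ∀ k, ExtVanish N (F k)) :
    ExtVanish N (ModuleCat.of A (⨁ k, F k)) :=
  extVanish_iff.2 fun i => subsingleton_ext_directSum N i fun k => extVanish_iff.1 (h k) i

theorem extVanish_range_of_exact {C : ℕ → ModuleCat.{v} A} {d : ∀ i, C i →ₗ[A] C (i + 1)}
    (hd : ∀ i, Function.Exact (d i) (d (i + 1))) {m : ℕ} (hm : ∀ i, m ≤ i → Subsingleton (C i))
    {M : ModuleCat.{v} A} (hC : ∀ i, ExtVanish (C i) M) (i : ℕ) :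
    ExtVanish (ModuleCat.of A (LinearMap.range (d i))) M := by
  have shift (i : ℕ) (h : ExtVanish (ModuleCat.of A (LinearMap.range (d (i + 1)))) M) :
      ExtVanish (ModuleCat.of A (LinearMap.range (d i))) M := by
    have hS := LinearMap.shortExact_shortComplexKer (d (i + 1)).surjective_rangeRestrict
    rw [extVanish_iff] at h ⊢
    rw [← (hd i).linearMap_ker_eq, ← LinearMap.ker_rangeRestrict]
    exact fun j => contravariant_subsingleton_ext_X₁ hS (extVanish_iff.1 (hC (i + 1)) j) (h (j + 1))
  have eventually (i : ℕ) (hi : m ≤ i) : ExtVanish (ModuleCat.of A (LinearMap.range (d i))) M := by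
    have := hm (i + 1) (by lia)
    have := (ModuleCat.isZero_of_subsingleton
      (ModuleCat.of A (LinearMap.range (d i)))).projective
    exact extVanish_iff.2 fun j => Ext.subsingleton_of_projective _ _ j
  exact forall_of_forall_ge_of_succ eventually shift i

theorem exists_extension_of_exact {L C D M : ModuleCat.{v} A} {f : L →ₗ[A] C} {d : C →ₗ[A] D}
    (hf : Function.Injective f) (hfd : Function.Exact f d)
    (h : ExtVanish (ModuleCat.of A (LinearMap.range d)) M) (φ : L →ₗ[A] M) :
    ∃ ψ : C →ₗ[A] M, ψ ∘ₗ f = φ := by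
  have exact_rangeRestrict : Function.Exact f d.rangeRestrict := by
    rw [LinearMap.exact_iff, LinearMap.ker_rangeRestrict, hfd.linearMap_ker_eq]
  have hS := ModuleCat.shortComplex_shortExact
    (ModuleCat.shortComplexOfCompEqZero f d.rangeRestrict
      exact_rangeRestrict.linearMap_comp_eq_zero)
    exact_rangeRestrict hf d.surjective_rangeRestrict
  obtain ⟨ψ, hψ⟩ := exists_extension_of_subsingleton_ext_one hS (extVanish_iff.1 h 0)
    (ModuleCat.ofHom φ)
  exact ⟨ψ.hom, congrArg ModuleCat.Hom.hom hψ⟩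

theorem InAddOf.exists_sum_comp_eq_id {T L : ModuleCat.{v} A}
    (hL : InAddOf (fun X => X = T) L) :
    ∃ (k : ℕ) (p : Fin k → (L →ₗ[A] T)) (q : Fin k → (T →ₗ[A] L)),
      ∑ i, q i ∘ₗ p i = LinearMap.id := by
  obtain ⟨k, F, hF, s, r, hrs⟩ := hL
  obtain rfl : F = fun _ => T := funext hF
  refine ⟨k, fun i => component A (Fin k) (fun _ => T) i ∘ₗ s,
    fun i => r ∘ₗ lof A (Fin k) (fun _ => T) i, LinearMap.ext fun x => ?_⟩
  calc (∑ i, (r ∘ₗ lof A (Fin k) (fun _ => T) i) ∘ₗ component A (Fin k) (fun _ => T) i ∘ₗ s) x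
      = r (∑ i, lof A (Fin k) (fun _ => T) i (s x i)) := by
        rw [LinearMap.sum_apply, map_sum]
        rfl
    _ = r (s x) := congrArg r (sum_univ_of (s x))
    _ = x := LinearMap.congr_fun hrs x

theorem InAddOf.extVanish {T L M : ModuleCat.{v} A} (hL : InAddOf (fun X => X = T) L)
    (hM : ExtVanish T M) : ExtVanish L M := by
  obtain ⟨k, p, q, hpq⟩ := hL.exists_sum_comp_eq_id
  have hid : ∑ i, ModuleCat.ofHom (p i) ≫ ModuleCat.ofHom (q i) = 𝟙 L := by
    ext1
    simpa using hpq
  exact extVanish_iff.2 fun j => subsingleton_ext_of_sum_comp_eq_id hid (extVanish_iff.1 hM j)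

/-- The canonical map `T^(Hom(T, M)) → M`, whose image is the trace of `T` in `M`; every map
`T → M` factors through it, so it is a right `Add T`-approximation of `M`. -/
noncomputable def evalDirectSum (T M : ModuleCat.{v} A) : (⨁ _ : T →ₗ[A] M, T) →ₗ[A] M :=
  open scoped Classical in toModule A (T →ₗ[A] M) M id

open scoped Classical in
theorem evalDirectSum_lof {T M : ModuleCat.{v} A} (φ : T →ₗ[A] M) (t : T) :
    evalDirectSum T M (lof A (T →ₗ[A] M) (fun _ => T) φ t) = φ t :=
  toModule_lof A (M := fun _ : T →ₗ[A] M => T) (φ := id) φ t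

theorem InAddOf.range_le_range_evalDirectSum {T L M : ModuleCat.{v} A}
    (hL : InAddOf (fun X => X = T) L) (ψ : L →ₗ[A] M) :
    LinearMap.range ψ ≤ LinearMap.range (evalDirectSum T M) := by
  classical
  obtain ⟨k, p, q, hpq⟩ := hL.exists_sum_comp_eq_id
  rintro _ ⟨x, rfl⟩
  refine ⟨∑ i, lof A _ (fun _ => T) (ψ ∘ₗ q i) (p i x), ?_⟩
  calc evalDirectSum T M (∑ i, lof A _ (fun _ => T) (ψ ∘ₗ q i) (p i x))
      = ψ ((∑ i, q i ∘ₗ p i) x) := by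
        simp only [map_sum, evalDirectSum_lof, LinearMap.comp_apply, LinearMap.sum_apply]
    _ = ψ x := by rw [hpq, LinearMap.id_apply]

theorem HasAddCoresolution.evalDirectSum_surjective {T M : ModuleCat.{v} A}
    (hT : HasAddCoresolution T (ModuleCat.of A A)) (hM : ExtVanish T M) :
    Function.Surjective (evalDirectSum T M) := by
  obtain ⟨C, d, f, hf, hfd, hd, hC, m, hm⟩ := hT
  intro y
  obtain ⟨ψ, hψ⟩ := exists_extension_of_exact hf hfd
    (extVanish_range_of_exact hd hm (fun i => (hC i).extVanish hM) 0)
    (LinearMap.toSpanSingleton A M y)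
  have hy : ψ (f 1) = y := by
    simpa using LinearMap.congr_fun hψ (1 : A)
  exact (hC 0).range_le_range_evalDirectSum ψ ⟨f 1, hy⟩

theorem IsTilting.extVanish_ker_evalDirectSum [IsNoetherianRing A] {T M : ModuleCat.{v} A}
    (hT : IsTilting T) (hM : ExtVanish T M) :
    ExtVanish T (ModuleCat.of A (LinearMap.ker (evalDirectSum T M))) := by
  classical
  obtain ⟨_, -, hTT, hA⟩ := hT
  have hS := LinearMap.shortExact_shortComplexKer (hA.evalDirectSum_surjective hM)
  have ext_directSum := extVanish_iff.1 (extVanish_directSum fun _ : T →ₗ[A] M => hTT)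
  rw [extVanish_iff] at hM ⊢
  rintro (_ | i)
  · exact subsingleton_ext_one_of_exists_lift hS (ext_directSum 0) fun φ =>
      ⟨ModuleCat.ofHom (lof A _ (fun _ => T) φ.hom),
        ModuleCat.hom_ext (LinearMap.ext (evalDirectSum_lof φ.hom))⟩
  · exact covariant_subsingleton_ext_X₁ hS (hM i) (ext_directSum (i + 1))

theorem IsTilting.extVanish_of_inP [IsNoetherianRing A] {T N M : ModuleCat.{v} A}
    (hT : IsTilting T) (hN : InP N) (hNT : ExtVanish N T) (hM : ExtVanish T M) :
    ExtVanish N M := by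
  obtain ⟨_, n, hn⟩ := hN
  have shift (j : ℕ)
      (h : ∀ M, ExtVanish T M → Subsingleton (Abelian.Ext N M (j + 1 + 1)))
      (M : ModuleCat.{v} A) (hM : ExtVanish T M) : Subsingleton (Abelian.Ext N M (j + 1)) :=
    covariant_subsingleton_ext_X₃
      (LinearMap.shortExact_shortComplexKer (hT.2.2.2.evalDirectSum_surjective hM))
      (extVanish_iff.1 (extVanish_directSum fun _ => hNT) j)
      (h _ (hT.extVanish_ker_evalDirectSum hM))
  have above_pd (j : ℕ) (hj : n ≤ j) (M : ModuleCat.{v} A) (_ : ExtVanish T M) :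
      Subsingleton (Abelian.Ext N M (j + 1)) :=
    (subsingleton_ext_iff N M j).1 (hn _ (by lia) M)
  exact extVanish_iff.2 fun j => forall_of_forall_ge_of_succ above_pd shift j M hM

end Modules

theorem stmt_7_general {A : Type u} [Ring A] [IsNoetherianRing A] {T : ModuleCat.{u} A}
    (hT : IsTilting T) (hperp : InPerpOf InP T) (M : ModuleCat.{u} A) :
    ExtVanish T M ↔ InPerpOf InP M :=
  ⟨fun hM N hN => hT.extVanish_of_inP hN (hperp N hN) hM, fun hM => hM T ⟨hT.1, hT.2.1⟩⟩

/-- If `E` is a finitely generated module all of whose indecomposable summands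
are Ext-injective in `𝒫` (so `E ∈ 𝒫^⊥ ∩ 𝒫`), and `E` is tilting, then `E^⊥ = 𝒫^⊥`. -/
theorem stmt_7 (Λ : Type u) [Ring Λ] (R : Type u) [CommRing R] [IsArtinianRing R]
    [Algebra R Λ] [Module.Finite R Λ]
    (E : ModuleCat.{u} Λᵐᵒᵖ) (hfg : Module.Finite Λᵐᵒᵖ E)
    (hsummands : ∀ M : ModuleCat.{u} Λᵐᵒᵖ, Indec M → IsSummand M E → ExtInjInP M)
    (hEP : InP E) (hEperp : InPerpOf InP E)
    (htilt : IsTilting E) :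
    ∀ M : ModuleCat.{u} Λᵐᵒᵖ, ExtVanish E M ↔ InPerpOf InP M := by
  have := IsNoetherianRing.of_finite R Λᵐᵒᵖ
  exact stmt_7_general htilt hEperp
end

section
/- Let Λ be an artin algebra and P the class of finitely generated right Λ-modules of finite projective dimension. Then P is contravariantly finite in mod Λ if and only if the direct sum E of a complete set of representatives of the indecomposable Ext-injective modules in P is a tilting Λ-module. -/
open CategoryTheory

universe u

/-!
Suppose `𝒫` is contravariantly finite. A minimal right `𝒫`-approximation is onto with kernel in
`𝒫^⊥` (Wakamatsu's lemma), and a horseshoe argument along composition series bounds the projective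
dimension of such approximations by its values at the simple modules. On `𝒫` the approximations
split, so the bound `n` applies to all of `𝒫`. Pulling back the approximation of the cokernel of an
embedding of `M ∈ 𝒫` into an injective module embeds `M` into an Ext-injective module of `𝒫` with
cokernel in `𝒫`. Since `Ext^i(𝒫, -)` vanishes for `i > n`, iterating gives a finite coresolution of
`M` by Ext-injectives. The terms of such a coresolution of the algebra add up to a module `T`, and
every Ext-injective module of `𝒫` lies in `add T`; by Krull–Schmidt there are finitely many
indecomposable ones, and their sum `E` is tilting.

Conversely, let `T` be Ext-injective in `𝒫` such that the algebra has a finite coresolution in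
`add T`. A finitely generated module `Y` in `T^⊥` is a quotient of a module in `add T` by a module
in `T^⊥`, so dimension shifting along modules of finite projective dimension gives `Y ∈ 𝒫^⊥`. Now
embed a syzygy `K` of `M` in a module `W ∈ T^⊥` with cokernel in `𝒫`; the pushout of
`0 → K → Q → M → 0` along `K → W` is a right `𝒫`-approximation of `M` with kernel `W`.
-/

section Ext

open Abelian

variable {A : Type u} [Ring A]

lemma subsingleton_ext_succ_iff (M N : ModuleCat.{u} A) (k : ℕ) :
    Subsingleton (ext M N (k + 1)) ↔ Subsingleton (Ext M N (k + 1)) := by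
  let P := projectiveResolution M
  have cocycle_iff : Subsingleton (ext M N (k + 1)) ↔
      ∀ f : P.complex.X (k + 1) ⟶ N, P.complex.d (k + 2) (k + 1) ≫ f = 0 →
        ∃ g : P.complex.X k ⟶ N, P.complex.d (k + 1) k ≫ g = f := by
    rw [← ModuleCat.isZero_iff_subsingleton, (P.isoExt (k + 1) N).isZero_iff,
      ← HomologicalComplex.exactAt_iff_isZero_homology,
      HomologicalComplex.exactAt_iff' _ k (k + 1) (k + 2) (by simp) (by simp),
      ShortComplex.moduleCat_exact_iff]
    rfl
  rw [cocycle_iff]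
  constructor
  · refine fun h => subsingleton_of_forall_eq 0 fun x => ?_
    obtain ⟨f, hf, rfl⟩ := P.extMk_surjective x (k + 2) rfl
    exact (P.extMk_eq_zero_iff f (k + 2) rfl hf k rfl).2 (h f hf)
  · exact fun h f hf => (P.extMk_eq_zero_iff f (k + 2) rfl hf k rfl).1 (Subsingleton.elim _ _)

lemma subsingleton_ext_iff_s9 (M N : ModuleCat.{u} A) {k : ℕ} (hk : 0 < k) :
    Subsingleton (ext M N k) ↔ Subsingleton (Ext M N k) := by
  obtain ⟨k, rfl⟩ := Nat.exists_eq_add_one.2 hk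
  exact subsingleton_ext_succ_iff M N k

lemma subsingleton_ext_of_projective (M N : ModuleCat.{u} A) [Module.Projective A M] {k : ℕ}
    (hk : 0 < k) : Subsingleton (ext M N k) := by
  obtain ⟨k, rfl⟩ := Nat.exists_eq_add_one.2 hk
  rw [subsingleton_ext_succ_iff]
  exact subsingleton_of_forall_eq 0 Ext.eq_zero_of_projective

lemma subsingleton_ext_of_injective (M N : ModuleCat.{u} A) [Module.Injective A N] {k : ℕ}
    (hk : 0 < k) : Subsingleton (ext M N k) := by
  obtain ⟨k, rfl⟩ := Nat.exists_eq_add_one.2 hk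
  rw [subsingleton_ext_succ_iff]
  have : Injective N := Module.injective_object_of_injective_module A N
  exact subsingleton_of_forall_eq 0 Ext.eq_zero_of_injective

end Ext

namespace ShortExact

open Abelian

variable {A : Type u} [Ring A] {M₁ M₂ M₃ : ModuleCat.{u} A} {f : M₁ →ₗ[A] M₂} {g : M₂ →ₗ[A] M₃}

lemma comp_eq_zero (h : ShortExact f g) : g ∘ₗ f = 0 :=
  h.2.1.linearMap_comp_eq_zero

/-- The short exact sequence as an object of the category of short complexes. -/
abbrev shortComplex (h : ShortExact f g) : ShortComplex (ModuleCat.{u} A) where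
  f := ModuleCat.ofHom f
  g := ModuleCat.ofHom g
  zero := ModuleCat.hom_ext h.comp_eq_zero

lemma shortExact_shortComplex (h : ShortExact f g) : h.shortComplex.ShortExact where
  exact := (ShortComplex.ShortExact.moduleCat_exact_iff_function_exact _).2 h.2.1
  mono_f := (ModuleCat.mono_iff_injective _).2 h.1
  epi_g := (ModuleCat.epi_iff_surjective _).2 h.2.2

lemma subsingleton_ext_covariant₁ (h : ShortExact f g) (X : ModuleCat.{u} A) {k : ℕ} (hk : 0 < k)
    (h₃ : Subsingleton (ext X M₃ k)) (h₂ : Subsingleton (ext X M₂ (k + 1))) :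
    Subsingleton (ext X M₁ (k + 1)) := by
  rw [subsingleton_ext_iff_s9 _ _ (by lia)] at *
  refine subsingleton_of_forall_eq 0 fun x => ?_
  obtain ⟨y, rfl⟩ :=
    Ext.covariant_sequence_exact₁ X h.shortExact_shortComplex x (h₂.elim _ _) rfl
  rw [h₃.elim y 0, Ext.zero_comp]

lemma subsingleton_ext_covariant₂ (h : ShortExact f g) (X : ModuleCat.{u} A) {k : ℕ} (hk : 0 < k)
    (h₁ : Subsingleton (ext X M₁ k)) (h₃ : Subsingleton (ext X M₃ k)) :
    Subsingleton (ext X M₂ k) := by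
  rw [subsingleton_ext_iff_s9 _ _ hk] at *
  refine subsingleton_of_forall_eq 0 fun x => ?_
  obtain ⟨y, rfl⟩ := Ext.covariant_sequence_exact₂ X h.shortExact_shortComplex x (h₃.elim _ _)
  rw [h₁.elim y 0, Ext.zero_comp]

lemma subsingleton_ext_covariant₃ (h : ShortExact f g) (X : ModuleCat.{u} A) {k : ℕ} (hk : 0 < k)
    (h₂ : Subsingleton (ext X M₂ k)) (h₁ : Subsingleton (ext X M₁ (k + 1))) :
    Subsingleton (ext X M₃ k) := by
  rw [subsingleton_ext_iff_s9 _ _ (by lia)] at *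
  refine subsingleton_of_forall_eq 0 fun x => ?_
  obtain ⟨y, rfl⟩ :=
    Ext.covariant_sequence_exact₃ X h.shortExact_shortComplex x rfl (h₁.elim _ _)
  rw [h₂.elim y 0, Ext.zero_comp]

lemma subsingleton_ext_contravariant₁ (h : ShortExact f g) (Y : ModuleCat.{u} A) {k : ℕ}
    (hk : 0 < k) (h₂ : Subsingleton (ext M₂ Y k)) (h₃ : Subsingleton (ext M₃ Y (k + 1))) :
    Subsingleton (ext M₁ Y k) := by
  rw [subsingleton_ext_iff_s9 _ _ (by lia)] at *
  refine subsingleton_of_forall_eq 0 fun x => ?_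
  obtain ⟨y, rfl⟩ := Ext.contravariant_sequence_exact₁ h.shortExact_shortComplex Y x
    (Nat.add_comm _ _) (h₃.elim _ _)
  rw [h₂.elim y 0, Ext.comp_zero]

lemma subsingleton_ext_contravariant₂ (h : ShortExact f g) (Y : ModuleCat.{u} A) {k : ℕ}
    (hk : 0 < k) (h₁ : Subsingleton (ext M₁ Y k)) (h₃ : Subsingleton (ext M₃ Y k)) :
    Subsingleton (ext M₂ Y k) := by
  rw [subsingleton_ext_iff_s9 _ _ hk] at *
  refine subsingleton_of_forall_eq 0 fun x => ?_
  obtain ⟨y, rfl⟩ := Ext.contravariant_sequence_exact₂ h.shortExact_shortComplex Y x (h₁.elim _ _)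
  rw [h₃.elim y 0, Ext.comp_zero]

lemma subsingleton_ext_contravariant₃ (h : ShortExact f g) (Y : ModuleCat.{u} A) {k : ℕ}
    (hk : 0 < k) (h₁ : Subsingleton (ext M₁ Y k)) (h₂ : Subsingleton (ext M₂ Y (k + 1))) :
    Subsingleton (ext M₃ Y (k + 1)) := by
  rw [subsingleton_ext_iff_s9 _ _ (by lia)] at *
  refine subsingleton_of_forall_eq 0 fun x => ?_
  obtain ⟨y, rfl⟩ := Ext.contravariant_sequence_exact₃ h.shortExact_shortComplex Y x (h₂.elim _ _)
    (Nat.add_comm _ _)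
  rw [h₁.elim y 0, Ext.comp_zero]

lemma exists_lift (h : ShortExact f g) {X : ModuleCat.{u} A} (h₁ : Subsingleton (ext X M₁ 1))
    (u : X →ₗ[A] M₃) : ∃ v : X →ₗ[A] M₂, g ∘ₗ v = u := by
  rw [subsingleton_ext_iff_s9 _ _ one_pos] at h₁
  obtain ⟨y, hy⟩ := Ext.covariant_sequence_exact₃ X h.shortExact_shortComplex
    (Ext.mk₀ (ModuleCat.ofHom u)) rfl (h₁.elim _ _)
  obtain ⟨v, rfl⟩ := (Ext.mk₀_bijective X M₂).2 y
  rw [Ext.mk₀_comp_mk₀] at hy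
  exact ⟨v.hom, congrArg ModuleCat.Hom.hom ((Ext.mk₀_bijective X M₃).1 hy)⟩

lemma exists_extend (h : ShortExact f g) {Y : ModuleCat.{u} A} (h₃ : Subsingleton (ext M₃ Y 1))
    (u : M₁ →ₗ[A] Y) : ∃ v : M₂ →ₗ[A] Y, v ∘ₗ f = u := by
  rw [subsingleton_ext_iff_s9 _ _ one_pos] at h₃
  obtain ⟨y, hy⟩ := Ext.contravariant_sequence_exact₁ h.shortExact_shortComplex Y
    (Ext.mk₀ (ModuleCat.ofHom u)) rfl (h₃.elim _ _)
  obtain ⟨v, rfl⟩ := (Ext.mk₀_bijective M₂ Y).2 y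
  rw [Ext.mk₀_comp_mk₀] at hy
  exact ⟨v.hom, congrArg ModuleCat.Hom.hom ((Ext.mk₀_bijective M₁ Y).1 hy)⟩

lemma subsingleton_ext_one_of_forall_lift (h : ShortExact f g) (X : ModuleCat.{u} A)
    (h₂ : Subsingleton (ext X M₂ 1)) (hlift : ∀ u : X →ₗ[A] M₃, ∃ v : X →ₗ[A] M₂, g ∘ₗ v = u) :
    Subsingleton (ext X M₁ 1) := by
  rw [subsingleton_ext_iff_s9 _ _ one_pos] at *
  refine subsingleton_of_forall_eq 0 fun x => ?_
  have hS := h.shortExact_shortComplex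
  obtain ⟨y, rfl⟩ := Ext.covariant_sequence_exact₁ X hS x (h₂.elim _ _) rfl
  obtain ⟨u, rfl⟩ := (Ext.mk₀_bijective X M₃).2 y
  obtain ⟨v, hv⟩ := hlift u.hom
  have hu : u = ModuleCat.ofHom v ≫ h.shortComplex.g := ModuleCat.hom_ext hv.symm
  rw [hu, ← Ext.mk₀_comp_mk₀]
  rw [Ext.comp_assoc _ _ _ (add_zero 0) (zero_add 1) (by simp), hS.comp_extClass, Ext.comp_zero]

lemma subsingleton_ext_one_of_forall_extend (h : ShortExact f g) (Y : ModuleCat.{u} A)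
    (h₂ : Subsingleton (ext M₂ Y 1)) (hext : ∀ u : M₁ →ₗ[A] Y, ∃ v : M₂ →ₗ[A] Y, v ∘ₗ f = u) :
    Subsingleton (ext M₃ Y 1) := by
  rw [subsingleton_ext_iff_s9 _ _ one_pos] at *
  refine subsingleton_of_forall_eq 0 fun x => ?_
  have hS := h.shortExact_shortComplex
  obtain ⟨y, rfl⟩ := Ext.contravariant_sequence_exact₃ hS Y x (h₂.elim _ _) (add_zero 1)
  obtain ⟨u, rfl⟩ := (Ext.mk₀_bijective M₁ Y).2 y
  obtain ⟨v, hv⟩ := hext u.hom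
  have hu : u = h.shortComplex.f ≫ ModuleCat.ofHom v := ModuleCat.hom_ext hv.symm
  rw [hu, ← Ext.mk₀_comp_mk₀, ← Ext.comp_assoc hS.extClass _ _ (add_zero 1) _ (by simp)]
  rw [hS.extClass_comp, Ext.zero_comp]

end ShortExact

section Squares

variable {A : Type u} [Ring A] {K M N P Q : ModuleCat.{u} A}
variable {a : P →ₗ[A] M} {b : P →ₗ[A] N} {c : M →ₗ[A] Q} {d : N →ₗ[A] Q}

lemma exists_linearMap_of_isPushout
    (sq : IsPushout (ModuleCat.ofHom a) (ModuleCat.ofHom b) (ModuleCat.ofHom c) (ModuleCat.ofHom d))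
    (p : M →ₗ[A] K) (q : N →ₗ[A] K) (h : p ∘ₗ a = q ∘ₗ b) :
    ∃ r : Q →ₗ[A] K, r ∘ₗ c = p ∧ r ∘ₗ d = q :=
  have h : ModuleCat.ofHom a ≫ ModuleCat.ofHom p = ModuleCat.ofHom b ≫ ModuleCat.ofHom q :=
    ModuleCat.hom_ext h
  ⟨(sq.desc _ _ h).hom, congrArg ModuleCat.Hom.hom (sq.inl_desc _ _ h),
    congrArg ModuleCat.Hom.hom (sq.inr_desc _ _ h)⟩

lemma linearMap_ext_of_isPushout
    (sq : IsPushout (ModuleCat.ofHom a) (ModuleCat.ofHom b) (ModuleCat.ofHom c) (ModuleCat.ofHom d))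
    {p q : Q →ₗ[A] K} (hc : p ∘ₗ c = q ∘ₗ c) (hd : p ∘ₗ d = q ∘ₗ d) : p = q :=
  congrArg ModuleCat.Hom.hom (sq.hom_ext (k := ModuleCat.ofHom p) (l := ModuleCat.ofHom q)
    (ModuleCat.hom_ext hc) (ModuleCat.hom_ext hd))

lemma exists_linearMap_of_isPullback
    (sq : IsPullback (ModuleCat.ofHom a) (ModuleCat.ofHom b) (ModuleCat.ofHom c)
      (ModuleCat.ofHom d))
    (p : K →ₗ[A] M) (q : K →ₗ[A] N) (h : c ∘ₗ p = d ∘ₗ q) :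
    ∃ r : K →ₗ[A] P, a ∘ₗ r = p ∧ b ∘ₗ r = q :=
  have h : ModuleCat.ofHom p ≫ ModuleCat.ofHom c = ModuleCat.ofHom q ≫ ModuleCat.ofHom d :=
    ModuleCat.hom_ext h
  ⟨(sq.lift _ _ h).hom, congrArg ModuleCat.Hom.hom (sq.lift_fst _ _ h),
    congrArg ModuleCat.Hom.hom (sq.lift_snd _ _ h)⟩

lemma linearMap_ext_of_isPullback
    (sq : IsPullback (ModuleCat.ofHom a) (ModuleCat.ofHom b) (ModuleCat.ofHom c)
      (ModuleCat.ofHom d))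
    {p q : K →ₗ[A] P} (ha : a ∘ₗ p = a ∘ₗ q) (hb : b ∘ₗ p = b ∘ₗ q) : p = q :=
  congrArg ModuleCat.Hom.hom (sq.hom_ext (k := ModuleCat.ofHom p) (l := ModuleCat.ofHom q)
    (ModuleCat.hom_ext ha) (ModuleCat.hom_ext hb))

end Squares

namespace ShortExact

variable {A : Type u} [Ring A] {M₁ M₂ M₃ : ModuleCat.{u} A} {f : M₁ →ₗ[A] M₂} {g : M₂ →ₗ[A] M₃}

lemma of_surjective {M N : ModuleCat.{u} A} (g : M →ₗ[A] N) (hg : Function.Surjective g) :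
    ShortExact (M₁ := ModuleCat.of A (LinearMap.ker g)) (LinearMap.ker g).subtype g :=
  ⟨Subtype.val_injective, LinearMap.exact_subtype_ker_map g, hg⟩

lemma of_injective {M N : ModuleCat.{u} A} (f : M →ₗ[A] N) (hf : Function.Injective f) :
    ShortExact (M₃ := ModuleCat.of A (N ⧸ LinearMap.range f)) f (LinearMap.range f).mkQ :=
  ⟨hf, LinearMap.exact_map_mkQ_range f, Submodule.mkQ_surjective _⟩

lemma exists_desc (h : ShortExact f g) {N : ModuleCat.{u} A} (k : M₂ →ₗ[A] N) (hk : k ∘ₗ f = 0) :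
    ∃ k' : M₃ →ₗ[A] N, k' ∘ₗ g = k := by
  have hS := h.shortExact_shortComplex
  have := hS.epi_g
  have hk' : h.shortComplex.f ≫ ModuleCat.ofHom k = 0 := ModuleCat.hom_ext hk
  exact ⟨(hS.exact.desc (ModuleCat.ofHom k) hk').hom,
    congrArg ModuleCat.Hom.hom (hS.exact.g_desc _ hk')⟩

lemma exists_factor (h : ShortExact f g) {N : ModuleCat.{u} A} (k : N →ₗ[A] M₂)
    (hk : g ∘ₗ k = 0) : ∃ k' : N →ₗ[A] M₁, f ∘ₗ k' = k := by
  have hS := h.shortExact_shortComplex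
  have := hS.mono_f
  have hk' : ModuleCat.ofHom k ≫ h.shortComplex.g = 0 := ModuleCat.hom_ext hk
  exact ⟨(hS.exact.lift (ModuleCat.ofHom k) hk').hom,
    congrArg ModuleCat.Hom.hom (hS.exact.lift_f _ hk')⟩

lemma exists_of_isPushout (h : ShortExact f g) {N B : ModuleCat.{u} A} {u : M₁ →ₗ[A] N}
    {j : M₂ →ₗ[A] B} {f' : N →ₗ[A] B} (sq : IsPushout (ModuleCat.ofHom f) (ModuleCat.ofHom u)
      (ModuleCat.ofHom j) (ModuleCat.ofHom f')) :
    ∃ g' : B →ₗ[A] M₃, ShortExact f' g' ∧ g' ∘ₗ j = g := by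
  have : Mono (ModuleCat.ofHom f) := h.shortExact_shortComplex.mono_f
  have hf' : Mono (ModuleCat.ofHom f') := Abelian.mono_inr_of_isColimit _ _ sq.isColimit
  obtain ⟨g', hg'j, hg'f'⟩ := exists_linearMap_of_isPushout sq g 0 <| by
    rw [h.comp_eq_zero, LinearMap.zero_comp]
  refine ⟨g', ⟨(ModuleCat.mono_iff_injective _).1 hf', ?_, ?_⟩, hg'j⟩
  · let C := ModuleCat.of A (B ⧸ LinearMap.range f')
    let q : B →ₗ[A] C := (LinearMap.range f').mkQ
    have hqf' : q ∘ₗ f' = 0 := LinearMap.range_mkQ_comp f'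
    have hjf : j ∘ₗ f = f' ∘ₗ u := congrArg ModuleCat.Hom.hom sq.w
    obtain ⟨k, hk⟩ := h.exists_desc (q ∘ₗ j) <| by
      rw [LinearMap.comp_assoc, hjf, ← LinearMap.comp_assoc, hqf', LinearMap.zero_comp]
    have hkg' : k ∘ₗ g' = q := linearMap_ext_of_isPushout sq
      (by rw [LinearMap.comp_assoc, hg'j, hk])
      (by rw [LinearMap.comp_assoc, hg'f', LinearMap.comp_zero, hqf'])
    refine LinearMap.exact_of_comp_eq_zero_of_ker_le_range hg'f' fun x hx => ?_
    rw [← (LinearMap.range f').ker_mkQ]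
    exact (LinearMap.congr_fun hkg' x).symm.trans ((congrArg k hx).trans (map_zero k))
  · refine Function.Surjective.of_comp (g := j) ?_
    rw [← LinearMap.coe_comp, hg'j]
    exact h.2.2

lemma exists_of_isPullback (h : ShortExact f g) {N B : ModuleCat.{u} A} {v : N →ₗ[A] M₃}
    {j : B →ₗ[A] M₂} {g' : B →ₗ[A] N} (sq : IsPullback (ModuleCat.ofHom j) (ModuleCat.ofHom g')
      (ModuleCat.ofHom g) (ModuleCat.ofHom v)) :
    ∃ f' : M₁ →ₗ[A] B, ShortExact f' g' ∧ j ∘ₗ f' = f := by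
  have : Epi (ModuleCat.ofHom g) := h.shortExact_shortComplex.epi_g
  have hg' : Epi (ModuleCat.ofHom g') := Abelian.epi_snd_of_isLimit _ _ sq.isLimit
  obtain ⟨f', hjf', hg'f'⟩ := exists_linearMap_of_isPullback sq f 0 <| by
    rw [h.comp_eq_zero, LinearMap.comp_zero]
  refine ⟨f', ⟨?_, ?_, (ModuleCat.epi_iff_surjective _).1 hg'⟩, hjf'⟩
  · refine Function.Injective.of_comp (f := j) ?_
    rw [← LinearMap.coe_comp, hjf']
    exact h.1
  · let K := ModuleCat.of A (LinearMap.ker g')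
    let i : K →ₗ[A] B := (LinearMap.ker g').subtype
    have hg'i : g' ∘ₗ i = 0 := LinearMap.comp_ker_subtype g'
    have hgj : g ∘ₗ j = v ∘ₗ g' := congrArg ModuleCat.Hom.hom sq.w
    obtain ⟨k, hk⟩ := h.exists_factor (j ∘ₗ i) <| by
      rw [← LinearMap.comp_assoc, hgj, LinearMap.comp_assoc, hg'i, LinearMap.comp_zero]
    have hf'k : f' ∘ₗ k = i := linearMap_ext_of_isPullback sq
      (by rw [← LinearMap.comp_assoc, hjf', hk])
      (by rw [← LinearMap.comp_assoc, hg'f', LinearMap.zero_comp, hg'i])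
    exact LinearMap.exact_of_comp_eq_zero_of_ker_le_range hg'f' fun x hx =>
      ⟨k ⟨x, hx⟩, LinearMap.congr_fun hf'k ⟨x, hx⟩⟩

lemma comp_of_isPullback {N B D : ModuleCat.{u} A} {v : N →ₗ[A] M₃} {w : M₃ →ₗ[A] D}
    (h : ShortExact v w) (hg : Function.Surjective g) {j : B →ₗ[A] M₂} {g' : B →ₗ[A] N}
    (sq : IsPullback (ModuleCat.ofHom j) (ModuleCat.ofHom g') (ModuleCat.ofHom g)
      (ModuleCat.ofHom v)) :
    ShortExact j (w ∘ₗ g) := by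
  have : Mono (ModuleCat.ofHom v) := h.shortExact_shortComplex.mono_f
  have hgj : g ∘ₗ j = v ∘ₗ g' := congrArg ModuleCat.Hom.hom sq.w
  refine ⟨(ModuleCat.mono_iff_injective _).1 sq.mono_fst_of_mono, ?_, h.2.2.comp hg⟩
  refine LinearMap.exact_of_comp_eq_zero_of_ker_le_range ?_ fun x hx => ?_
  · rw [LinearMap.comp_assoc, hgj, ← LinearMap.comp_assoc, h.comp_eq_zero, LinearMap.zero_comp]
  · let K := ModuleCat.of A (LinearMap.ker (w ∘ₗ g))
    let i : K →ₗ[A] M₂ := (LinearMap.ker (w ∘ₗ g)).subtype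
    obtain ⟨k, hk⟩ := h.exists_factor (g ∘ₗ i) (LinearMap.comp_ker_subtype (w ∘ₗ g))
    obtain ⟨l, hl, -⟩ := exists_linearMap_of_isPullback sq i k hk.symm
    exact ⟨l ⟨x, hx⟩, LinearMap.congr_fun hl ⟨x, hx⟩⟩

end ShortExact

section DirectSums

open Abelian

variable {A : Type u} [Ring A]

lemma directSum_sum_lof_comp_component {ι : Type*} [Fintype ι] [DecidableEq ι]
    (F : ι → Type*) [∀ i, AddCommGroup (F i)] [∀ i, Module A (F i)] :
    ∑ i, DirectSum.lof A ι F i ∘ₗ DirectSum.component A ι F i = LinearMap.id := by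
  ext i x j
  simp only [LinearMap.comp_apply, LinearMap.id_apply, LinearMap.sum_apply]
  rw [Finset.sum_eq_single i]
  · rw [DirectSum.component.lof_self]
  · intro b _ hb
    rw [DirectSum.component.of, dif_neg hb.symm, map_zero]
  · simp

lemma mk₀_id_eq_sum {ι : Type*} [Fintype ι] {M : ModuleCat.{u} A} {F : ι → ModuleCat.{u} A}
    {s : ∀ i, M →ₗ[A] F i} {r : ∀ i, F i →ₗ[A] M} (h : ∑ i, r i ∘ₗ s i = LinearMap.id) :
    Ext.mk₀ (𝟙 M) = ∑ i, (Ext.mk₀ (ModuleCat.ofHom (s i))).comp (Ext.mk₀ (ModuleCat.ofHom (r i)))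
      (zero_add 0) := by
  have hid : 𝟙 M = ∑ i, ModuleCat.ofHom (s i) ≫ ModuleCat.ofHom (r i) := by
    ext x
    simpa [ModuleCat.hom_sum] using (LinearMap.congr_fun h x).symm
  rw [hid, Ext.mk₀_sum]
  simp only [Ext.mk₀_comp_mk₀]

end DirectSums

namespace InAddOf

open Abelian

variable {A : Type u} [Ring A] {X Y : ModuleCat.{u} A → Prop} {M N : ModuleCat.{u} A}

lemma of_sum {ι : Type*} [Fintype ι] {F : ι → ModuleCat.{u} A} (hF : ∀ i, X (F i))
    (s : ∀ i, M →ₗ[A] F i) (r : ∀ i, F i →ₗ[A] M) (h : ∑ i, r i ∘ₗ s i = LinearMap.id) :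
    InAddOf X M := by
  let e := (Fintype.equivFin ι).symm
  refine ⟨Fintype.card ι, fun i => F (e i), fun i => hF _,
    ∑ i, DirectSum.lof A _ (fun i => F (e i)) i ∘ₗ s (e i),
    DirectSum.toModule A _ M fun i => r (e i), ?_⟩
  rw [← h, ← e.sum_comp]
  ext x
  simp

lemma exists_sum (h : InAddOf X M) :
    ∃ (k : ℕ) (F : Fin k → ModuleCat.{u} A) (s : ∀ i, M →ₗ[A] F i) (r : ∀ i, F i →ₗ[A] M),
      (∀ i, X (F i)) ∧ ∑ i, r i ∘ₗ s i = LinearMap.id := by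
  obtain ⟨k, F, hF, s, r, hrs⟩ := h
  refine ⟨k, F, fun i => DirectSum.component A _ (fun i => F i) i ∘ₗ s,
    fun i => r ∘ₗ DirectSum.lof A _ (fun i => F i) i, hF, LinearMap.ext fun x => ?_⟩
  have hs := LinearMap.congr_fun (directSum_sum_lof_comp_component (A := A) fun i => F i) (s x)
  simp only [LinearMap.sum_apply, LinearMap.comp_apply] at hs ⊢
  rw [← map_sum, hs]
  exact LinearMap.congr_fun hrs x

lemma trans (hM : InAddOf X M) (hXY : ∀ N, X N → InAddOf Y N) : InAddOf Y M := by
  obtain ⟨k, F, s, r, hF, h⟩ := hM.exists_sum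
  choose l G s' r' hG h' using fun i => (hXY _ (hF i)).exists_sum
  refine of_sum (ι := Σ i, Fin (l i)) (F := fun p => G p.1 p.2) (fun p => hG _ _)
    (fun p => s' p.1 p.2 ∘ₗ s p.1) (fun p => r p.1 ∘ₗ r' p.1 p.2) ?_
  rw [← h, Fintype.sum_sigma]
  refine Finset.sum_congr rfl fun i _ => LinearMap.ext fun x => ?_
  have h'x := LinearMap.congr_fun (h' i) (s i x)
  simp only [LinearMap.sum_apply, LinearMap.comp_apply] at h'x ⊢
  exact (map_sum (r i) _ _).symm.trans (congrArg (r i) h'x)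

lemma of_isSummand (h : IsSummand M N) (hN : X N) : InAddOf X M := by
  obtain ⟨s, r, h⟩ := h
  exact of_sum (ι := Unit) (F := fun _ => N) (fun _ => hN) (fun _ => s) (fun _ => r) (by simp [h])

lemma of_mem (hM : X M) : InAddOf X M :=
  of_isSummand ⟨LinearMap.id, LinearMap.id, LinearMap.id_comp _⟩ hM

lemma of_subsingleton [Subsingleton M] : InAddOf X M :=
  of_sum (ι := Empty) (F := fun _ => M) (fun i => i.elim) (fun _ => 0) (fun _ => 0)
    (LinearMap.ext fun _ => Subsingleton.elim _ _)

lemma directSum {ι : Type u} [Finite ι] {F : ι → ModuleCat.{u} A} (hF : ∀ i, X (F i)) :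
    InAddOf X (ModuleCat.of A (DirectSum ι fun i => F i)) := by
  classical
  have := Fintype.ofFinite ι
  exact of_sum (M := ModuleCat.of A (DirectSum ι fun i => F i)) hF _ _
    (directSum_sum_lof_comp_component fun i => F i)

lemma finite (hM : InAddOf X M) (h : ∀ N, X N → Module.Finite A N) : Module.Finite A M := by
  obtain ⟨k, F, s, r, hF, hid⟩ := hM.exists_sum
  have (i : Fin k) : Module.Finite A (F i) := h _ (hF i)
  refine Module.Finite.of_surjective (∑ i, r i ∘ₗ LinearMap.proj i : (∀ i, F i) →ₗ[A] M) fun x =>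
    ⟨fun i => s i x, ?_⟩
  simpa using LinearMap.congr_fun hid x

lemma subsingleton_ext_left (hM : InAddOf X M) (Z : ModuleCat.{u} A) {i : ℕ} (hi : 0 < i)
    (h : ∀ N, X N → Subsingleton (ext N Z i)) : Subsingleton (ext M Z i) := by
  obtain ⟨k, F, s, r, hF, hid⟩ := hM.exists_sum
  rw [subsingleton_ext_iff_s9 _ _ hi]
  refine subsingleton_of_forall_eq 0 fun x => ?_
  rw [← Ext.mk₀_id_comp x, mk₀_id_eq_sum hid, Ext.sum_comp]
  refine Finset.sum_eq_zero fun j _ => ?_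
  have := (subsingleton_ext_iff_s9 _ _ hi).1 (h _ (hF j))
  rw [Ext.comp_assoc _ _ _ _ (zero_add i) (by lia),
    Subsingleton.elim (Ext.comp (Ext.mk₀ (ModuleCat.ofHom (r j))) x _) 0, Ext.comp_zero]

lemma subsingleton_ext_right (hM : InAddOf X M) (Z : ModuleCat.{u} A) {i : ℕ} (hi : 0 < i)
    (h : ∀ N, X N → Subsingleton (ext Z N i)) : Subsingleton (ext Z M i) := by
  obtain ⟨k, F, s, r, hF, hid⟩ := hM.exists_sum
  rw [subsingleton_ext_iff_s9 _ _ hi]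
  refine subsingleton_of_forall_eq 0 fun x => ?_
  rw [← Ext.comp_mk₀_id x, mk₀_id_eq_sum hid, Ext.comp_sum]
  refine Finset.sum_eq_zero fun j _ => ?_
  have := (subsingleton_ext_iff_s9 _ _ hi).1 (h _ (hF j))
  rw [← Ext.comp_assoc _ _ _ (add_zero i) _ (by lia),
    Subsingleton.elim (Ext.comp x (Ext.mk₀ (ModuleCat.ofHom (s j))) _) 0, Ext.zero_comp]

protected lemma pdLE (hM : InAddOf X M) {n : ℕ} (h : ∀ N, X N → pdLE N n) : pdLE M n :=
  fun i hi Z => hM.subsingleton_ext_left Z (by lia) fun N hN => h N hN i hi Z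

lemma extVanish_left (hM : InAddOf X M) (h : ∀ K, X K → ExtVanish K N) : ExtVanish M N :=
  fun i hi => hM.subsingleton_ext_left N hi fun K hK => h K hK i hi

lemma extVanish_right (hM : InAddOf X M) (h : ∀ K, X K → ExtVanish N K) : ExtVanish N M :=
  fun i hi => hM.subsingleton_ext_right N hi fun K hK => h K hK i hi

end InAddOf

section FiniteProjectiveDimension

variable {A : Type u} [Ring A] {M M₁ M₂ M₃ : ModuleCat.{u} A}

lemma pdLE.mono {m n : ℕ} (h : pdLE M m) (hmn : m ≤ n) : pdLE M n :=
  fun i hi => h i (by lia)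

lemma pdLE_of_projective (M : ModuleCat.{u} A) [Module.Projective A M] : pdLE M 0 :=
  fun _ hi N => subsingleton_ext_of_projective M N hi

lemma ShortExact.pdLE₁ {f : M₁ →ₗ[A] M₂} {g : M₂ →ₗ[A] M₃} (h : ShortExact f g) {n : ℕ}
    (h₂ : pdLE M₂ n) (h₃ : pdLE M₃ (n + 1)) : pdLE M₁ n := fun i hi N =>
  h.subsingleton_ext_contravariant₁ N (by lia) (h₂ i hi N) (h₃ (i + 1) (by lia) N)

lemma ShortExact.pdLE₂ {f : M₁ →ₗ[A] M₂} {g : M₂ →ₗ[A] M₃} (h : ShortExact f g) {n : ℕ}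
    (h₁ : pdLE M₁ n) (h₃ : pdLE M₃ n) : pdLE M₂ n := fun i hi N =>
  h.subsingleton_ext_contravariant₂ N (by lia) (h₁ i hi N) (h₃ i hi N)

lemma resolving_inP [IsNoetherianRing A] : Resolving (InP (A := A)) := by
  refine ⟨fun M hM _ => ⟨hM, 0, pdLE_of_projective M⟩, fun M₁ M₂ M₃ f g h hM₁ hM₃ => ?_,
    fun M₁ M₂ M₃ f g h hM₂ hM₃ => ?_⟩
  · obtain ⟨fg₁, m, hm⟩ := hM₁
    obtain ⟨fg₃, n, hn⟩ := hM₃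
    exact ⟨.of_exact h.2.1 h.2.2, max m n,
      h.pdLE₂ (hm.mono (le_max_left _ _)) (hn.mono (le_max_right _ _))⟩
  · obtain ⟨fg₂, m, hm⟩ := hM₂
    obtain ⟨-, n, hn⟩ := hM₃
    exact ⟨.of_injective f h.1, max m n,
      h.pdLE₁ (hm.mono (le_max_left _ _)) (hn.mono (by lia))⟩

lemma InAddOf.inP (hM : InAddOf InP M) : InP M := by
  obtain ⟨k, F, s, r, hF, h⟩ := hM.exists_sum
  choose hfg n hn using hF
  obtain ⟨m, hm⟩ := Finite.bddAbove_range n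
  have hM' : InAddOf (fun N => Module.Finite A N ∧ pdLE N m) M :=
    .of_sum (fun i => ⟨hfg i, (hn i).mono (hm ⟨i, rfl⟩)⟩) s r h
  exact ⟨hM'.finite fun N hN => hN.1, m, hM'.pdLE fun N hN => hN.2⟩

lemma InAddOf.extInjInP (hM : InAddOf ExtInjInP M) : ExtInjInP M :=
  ⟨(hM.trans fun _ hN => .of_mem hN.1).inP,
    fun N hN => hM.subsingleton_ext_right N one_pos fun _ hK => hK.2 N hN⟩

lemma exists_projective_presentation (M : ModuleCat.{u} A) [Module.Finite A M] :
    ∃ (K Q : ModuleCat.{u} A) (f : K →ₗ[A] Q) (g : Q →ₗ[A] M),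
      ShortExact f g ∧ Module.Finite A Q ∧ Module.Projective A Q := by
  obtain ⟨n, g, hg⟩ := Module.Finite.exists_fin' A M
  exact ⟨_, ModuleCat.of A (Fin n → A), _, _, .of_surjective _ hg,
    inferInstanceAs (Module.Finite A (Fin n → A)),
    inferInstanceAs (Module.Projective A (Fin n → A))⟩

lemma Resolving.inPerpOf {X : ModuleCat.{u} A → Prop} (hX : Resolving X)
    (hfg : ∀ N, X N → Module.Finite A N) (hM : ∀ N, X N → Subsingleton (ext N M 1)) :
    InPerpOf X M := by
  intro N hN i hi
  obtain ⟨i, rfl⟩ := Nat.exists_eq_add_one.2 hi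
  induction i generalizing N with
  | zero => exact hM N hN
  | succ i ih =>
    have := hfg N hN
    obtain ⟨K, Q, f, g, h, hQ, hQp⟩ := exists_projective_presentation N
    exact h.subsingleton_ext_contravariant₃ M i.succ_pos
      (ih K (hX.2.2 _ _ _ f g h (hX.1 Q hQ hQp) hN) i.succ_pos)
      (subsingleton_ext_of_projective Q M (by lia))

lemma ExtInjInP.inPerpOf [IsNoetherianRing A] (hM : ExtInjInP M) : InPerpOf InP M :=
  resolving_inP.inPerpOf (fun _ hN => hN.1) hM.2

end FiniteProjectiveDimension

section KrullSchmidt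

variable {A : Type u} [Ring A] {X : ModuleCat.{u} A → Prop} {M N : ModuleCat.{u} A}

lemma Indec.isNilpotent_or_isUnit [IsArtinian A M] [IsNoetherian A M] (hM : Indec M)
    (f : Module.End A M) : IsNilpotent f ∨ IsUnit f := by
  obtain ⟨n, hn⟩ := Filter.eventually_atTop.1 (LinearMap.eventually_isCompl_ker_pow_range_pow f)
  have fitting := hn (n + 1) (by lia)
  rcases hM.2 _ (Submodule.isIdempotentElem_projection fitting) with h | h
  · have hker : LinearMap.ker (f ^ (n + 1)) = ⊥ := by
      rw [← Submodule.range_projection fitting, h, LinearMap.range_zero]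
    have hrange : LinearMap.range (f ^ (n + 1)) = ⊤ := by
      rw [← Submodule.ker_projection fitting, h, LinearMap.ker_zero]
    have hunit : IsUnit (f ^ (n + 1)) := (Module.End.isUnit_iff _).2
      ⟨LinearMap.ker_eq_bot.1 hker, LinearMap.range_eq_top.1 hrange⟩
    exact .inr ((isUnit_pow_iff (by lia)).1 hunit)
  · refine .inl ⟨n + 1, ?_⟩
    rw [← LinearMap.ker_eq_top, ← Submodule.range_projection fitting, h, LinearMap.range_id]

lemma Indec.isLocalRing_end [IsArtinian A M] [IsNoetherian A M] (hM : Indec M) :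
    IsLocalRing (Module.End A M) := by
  have : Nontrivial M := not_subsingleton_iff_nontrivial.1 hM.1
  exact .of_isUnit_or_isUnit_one_sub_self fun f =>
    (hM.isNilpotent_or_isUnit f).symm.imp_right IsNilpotent.isUnit_one_sub

lemma Indec.nonempty_equiv_of_isSummand (hN : Indec N) (hM : ¬ Subsingleton M)
    (h : IsSummand M N) : Nonempty (M ≃ₗ[A] N) := by
  obtain ⟨s, r, hrs⟩ := h
  have hrs' (x : M) : r (s x) = x := LinearMap.congr_fun hrs x
  rcases hN.2 (s ∘ₗ r) (LinearMap.ext fun x => by simp only [LinearMap.comp_apply, hrs'])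
    with hsr | hsr
  · refine absurd (subsingleton_of_forall_eq 0 fun x => ?_) hM
    have hx := LinearMap.congr_fun hsr (s x)
    rw [LinearMap.comp_apply, hrs', LinearMap.zero_apply] at hx
    rw [← hrs' x, hx, map_zero]
  · exact ⟨LinearEquiv.ofLinearMap s r hsr hrs⟩

lemma Indec.exists_equiv_of_inAddOf [IsArtinian A M] [IsNoetherian A M] (hM : Indec M)
    (h : InAddOf X M) (hX : ∀ N, X N → Indec N) : ∃ N, X N ∧ Nonempty (M ≃ₗ[A] N) := by
  obtain ⟨k, F, s, r, hF, hid⟩ := h.exists_sum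
  have := hM.isLocalRing_end
  have hunit : IsUnit (∑ i, r i ∘ₗ s i : Module.End A M) := hid ▸ isUnit_one
  obtain ⟨i, -, u, hu⟩ := IsLocalRing.exists_of_isUnit_sum hunit
  have hsummand : IsSummand M (F i) := ⟨s i, u⁻¹.1 ∘ₗ r i, by
    rw [LinearMap.comp_assoc, ← hu]
    exact u.inv_mul⟩
  exact ⟨F i, hF i, (hX _ (hF i)).nonempty_equiv_of_isSummand hM.1 hsummand⟩

lemma isSummand_range_of_idempotent {e : M →ₗ[A] M} (he : e ∘ₗ e = e) :
    IsSummand (ModuleCat.of A (LinearMap.range e)) M := by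
  refine ⟨(LinearMap.range e).subtype, e.rangeRestrict, ?_⟩
  ext ⟨_, x, rfl⟩
  exact LinearMap.congr_fun he x

lemma length_range_lt_of_idempotent [IsArtinian A M] [IsNoetherian A M] {e : M →ₗ[A] M}
    (he : e ∘ₗ e = e) (he1 : e ≠ LinearMap.id) :
    Module.length A (LinearMap.range e) < Module.length A M := by
  refine Submodule.length_lt fun htop => he1 ?_
  exact (LinearMap.IsIdempotentElem.isProj_range e he).submodule_eq_top_iff.1 htop

/-- The existence half of the Krull–Schmidt theorem. -/
theorem inAddOf_indec_and [IsArtinianRing A] (hfg : ∀ N, X N → Module.Finite A N)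
    (hX : ∀ M N, IsSummand M N → X N → X M) (hM : X M) :
    InAddOf (fun N => Indec N ∧ X N) M := by
  induction hl : Module.length A M using WellFoundedLT.induction generalizing M with
  | ind l ih =>
  subst hl
  have := hfg M hM
  by_cases hzero : Subsingleton M
  · exact .of_subsingleton
  by_cases hindec : Indec M
  · exact .of_mem ⟨hindec, hM⟩
  obtain ⟨e, he, he0, he1⟩ : ∃ e : M →ₗ[A] M, e ∘ₗ e = e ∧ e ≠ 0 ∧ e ≠ LinearMap.id := by
    simpa [Indec, hzero] using hindec
  have ih_range (e : M →ₗ[A] M) (he : e ∘ₗ e = e) (he1 : e ≠ LinearMap.id) :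
      InAddOf (fun N => Indec N ∧ X N) (ModuleCat.of A (LinearMap.range e)) :=
    ih _ (length_range_lt_of_idempotent he he1) (M := ModuleCat.of A (LinearMap.range e))
      (hX _ _ (isSummand_range_of_idempotent he) hM) rfl
  have he' : (LinearMap.id - e) ∘ₗ (LinearMap.id - e) = LinearMap.id - e := by
    simp [LinearMap.sub_comp, LinearMap.comp_sub, he]
  have he1' : LinearMap.id - e ≠ LinearMap.id := by simpa using he0
  let c (b : Bool) : M →ₗ[A] M := bif b then e else LinearMap.id - e
  have hc : InAddOf (fun N => ∃ b, N = ModuleCat.of A (LinearMap.range (c b))) M :=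
    .of_sum (fun b => ⟨b, rfl⟩) (fun b => (c b).rangeRestrict) (fun b => (c b).range.subtype) <| by
      simp [c, LinearMap.subtype_comp_codRestrict]
  refine hc.trans ?_
  rintro _ ⟨_ | _, rfl⟩
  exacts [ih_range _ he' he1', ih_range e he he1]

end KrullSchmidt

section Essential

/-- `a` is essential in `b`: it meets every nonzero `c ≤ b`. Applied to the lattice of submodules,
this is the notion of an essential extension. -/
def IsEssentialIn {α : Type*} [SemilatticeInf α] [OrderBot α] (a b : α) : Prop :=
  ∀ c ≤ b, Disjoint a c → c = ⊥

variable {α : Type*}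

lemma isEssentialIn_self [SemilatticeInf α] [OrderBot α] (a : α) : IsEssentialIn a a :=
  fun _ hca hc => le_bot_iff.1 (hc hca le_rfl)

lemma IsEssentialIn.trans [SemilatticeInf α] [OrderBot α] {a b c : α} (hab : IsEssentialIn a b)
    (hbc : IsEssentialIn b c) : IsEssentialIn a c := by
  refine fun d hdc hd => hbc d hdc (disjoint_iff.2 ?_)
  exact hab _ inf_le_left (hd.mono_right inf_le_right)

lemma exists_maximal_isEssentialIn [CompleteLattice α] [IsCompactlyGenerated α] (a : α) :
    ∃ b, a ≤ b ∧ Maximal (IsEssentialIn a) b := by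
  refine zorn_le_nonempty₀ {b | IsEssentialIn a b} (fun s hs hchain _ _ => ?_) a
    (isEssentialIn_self a)
  refine ⟨sSup s, fun c hc hac => ?_, fun d hd => le_sSup hd⟩
  rw [← inf_eq_left.2 hc, hchain.directedOn.inf_sSup_eq]
  exact iSup₂_eq_bot.2 fun d hd => hs hd _ inf_le_right (hac.mono_right inf_le_left)

lemma exists_maximal_disjoint [CompleteLattice α] [IsCompactlyGenerated α] (a : α) :
    ∃ b, Maximal (Disjoint a) b :=
  zorn_le₀ {b | Disjoint a b} fun s hs hchain =>
    ⟨sSup s, hchain.directedOn.disjoint_sSup_right.2 fun _ hb => hs hb, fun _ hb => le_sSup hb⟩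

variable {A : Type u} [Ring A]

lemma le_of_isEssentialIn_top {J : Type*} [AddCommGroup J] [Module A J] {M S : Submodule A J}
    [IsSemisimpleModule A S] (hM : IsEssentialIn M ⊤) : S ≤ M := by
  obtain ⟨C, hC⟩ := exists_isCompl (M.comap S.subtype)
  have hdisj : Disjoint M (C.map S.subtype) := by
    rw [Submodule.disjoint_def]
    rintro _ hx ⟨x, hxC, rfl⟩
    exact congrArg S.subtype (Submodule.disjoint_def.1 hC.disjoint x hx hxC)
  have hC0 : C = ⊥ := by
    rw [← (Submodule.map_injective_of_injective S.injective_subtype).eq_iff' (Submodule.map_bot _)]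
    exact hM _ le_top hdisj
  have htop : M.comap S.subtype = ⊤ := by simpa [hC0] using hC.sup_eq_top
  exact Submodule.comap_subtype_eq_top.1 htop

lemma exists_isProj_of_maximal_isEssentialIn {I : Type u} [AddCommGroup I] [Module A I]
    [hI : Module.Injective A I] {M J : Submodule A I}
    (hJ : Maximal (IsEssentialIn M) J) : ∃ p : I →ₗ[A] I, LinearMap.IsProj J p := by
  obtain ⟨C, hC⟩ := exists_maximal_disjoint J
  obtain ⟨φ, hφ⟩ := hI.out (C.mkQ ∘ₗ J.subtype)
    (LinearMap.ker_eq_bot.1 <| by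
      rw [LinearMap.ker_comp, C.ker_mkQ, ← Submodule.disjoint_iff_comap_eq_bot]
      exact hC.prop) J.subtype
  let p : I →ₗ[A] I := φ ∘ₗ C.mkQ
  have hpJ : ∀ x ∈ J, p x = x := fun x hx => hφ ⟨x, hx⟩
  have hker : LinearMap.ker p = C := by
    refine (hC.eq_of_le ?_ ?_).symm
    · refine Submodule.disjoint_def.2 fun x hx hpx => ?_
      rw [← hpJ x hx, hpx]
    · exact C.ker_mkQ.symm.le.trans (LinearMap.ker_le_ker_comp _ _)
  have hess : IsEssentialIn J (LinearMap.range p) := by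
    intro N hN hJN
    have hcomap : N.comap p = LinearMap.ker p := by
      rw [hker]
      refine (hC.eq_of_le (Submodule.disjoint_def.2 fun x hx hpx => ?_) ?_).symm
      · exact Submodule.disjoint_def.1 hJN x hx (by simpa [hpJ x hx] using hpx)
      · rw [← hker]
        exact LinearMap.ker_le_comap p
    rw [← inf_eq_right.2 hN, ← Submodule.map_comap_eq, hcomap]
    exact (Submodule.map_le_iff_le_comap.2 le_rfl).antisymm bot_le
  have hrange : LinearMap.range p ≤ J :=
    hJ.le_of_ge (hJ.prop.trans hess) fun x hx => ⟨x, hpJ x hx⟩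
  exact ⟨p, fun x => hrange ⟨x, rfl⟩, hpJ⟩

lemma exists_injective_isEssentialIn_range (M : ModuleCat.{u} A) :
    ∃ (J : ModuleCat.{u} A) (f : M →ₗ[A] J), Module.Injective A J ∧ Function.Injective f ∧
      IsEssentialIn (LinearMap.range f) ⊤ := by
  let I := Injective.under M
  let i : M →ₗ[A] I := (Injective.ι M).hom
  have hi : Function.Injective i := (ModuleCat.mono_iff_injective _).1 (Injective.ι_mono M)
  have hI : Module.Injective A I :=
    Module.injective_module_of_injective_object (inj := Injective.injective_under M)
  obtain ⟨J, hMJ, hJ⟩ := exists_maximal_isEssentialIn (LinearMap.range i)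
  obtain ⟨p, hp⟩ := exists_isProj_of_maximal_isEssentialIn hJ
  let f : M →ₗ[A] J := i.codRestrict J fun x => hMJ ⟨x, rfl⟩
  refine ⟨ModuleCat.of A J, f, ⟨fun X Y _ _ _ _ k hk g => ?_⟩,
    fun x y h => hi (congrArg Subtype.val h), fun N _ hN => ?_⟩
  · obtain ⟨h, hh⟩ := hI.out k hk (J.subtype ∘ₗ g)
    refine ⟨hp.codRestrict ∘ₗ h, fun x => ?_⟩
    change hp.codRestrict (h (k x)) = g x
    rw [hh]
    exact hp.codRestrict_apply_cod (g x)
  · rw [← (Submodule.map_injective_of_injective J.injective_subtype).eq_iff' (Submodule.map_bot _)]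
    refine hJ.prop _ (Submodule.map_subtype_le J N) ?_
    rw [Submodule.disjoint_def] at hN ⊢
    rintro _ ⟨m, hm⟩ ⟨x, hx, rfl⟩
    exact congrArg Subtype.val (hN x ⟨m, Subtype.ext hm⟩ hx)

end Essential

section Annihilated

variable {A : Type*} [Ring A] (J : Type*) [AddCommGroup J] [Module A J]

/-- The submodule of the elements of `J` annihilated by the two-sided ideal `I`. The submodules
attached to the powers of the Jacobson radical form the socle series of `J`. -/
def annihilatedBy (I : Ideal A) [I.IsTwoSided] : Submodule A J where
  carrier := {x | ∀ a ∈ I, a • x = 0}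
  add_mem' hx hy a ha := by rw [smul_add, hx a ha, hy a ha, add_zero]
  zero_mem' _ _ := smul_zero _
  smul_mem' b x hx a ha := by
    rw [smul_smul]
    exact hx _ (I.mul_mem_right b ha)

lemma isSemisimpleModule_annihilatedBy_jacobson [IsSemiprimaryRing A] :
    IsSemisimpleModule A (annihilatedBy J (Ring.jacobson A)) := by
  have h : Module.IsTorsionBySet A (annihilatedBy J (Ring.jacobson A)) (Ring.jacobson A) :=
    fun x a => Subtype.ext (x.2 a a.2)
  let := h.module
  exact h.isSemisimpleModule_iff.1 inferInstance

variable (R : Type*) [CommRing R] [Algebra R A] [Module R J] [IsScalarTower R A J] {J}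

lemma isNoetherian_annihilatedBy_mul {I K : Ideal A} [I.IsTwoSided] [K.IsTwoSided]
    (hfg : I.FG) (hI : IsNoetherian R (annihilatedBy J I))
    (hK : IsNoetherian R (annihilatedBy J K)) :
    IsNoetherian R (annihilatedBy J (K * I)) := by
  obtain ⟨n, r, hr⟩ := Submodule.fg_iff_exists_fin_generating_family.1 hfg
  have hmem (i : Fin n) (x : annihilatedBy J (K * I)) : r i • (x : J) ∈ annihilatedBy J K := by
    intro a ha
    rw [smul_smul]
    exact x.2 _ (Ideal.mul_mem_mul ha (hr ▸ Submodule.subset_span ⟨i, rfl⟩))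
  let φ : annihilatedBy J (K * I) →ₗ[R] Fin n → annihilatedBy J K :=
    LinearMap.pi fun i =>
      { toFun x := ⟨r i • (x : J), hmem i x⟩
        map_add' x y := Subtype.ext (smul_add _ _ _)
        map_smul' c x := Subtype.ext (smul_algebra_smul_comm c (r i) (x : J)) }
  have hker (x : LinearMap.ker φ) : (x : J) ∈ annihilatedBy J I := by
    have hle : I ≤ LinearMap.ker (LinearMap.toSpanSingleton A J x) := by
      refine hr.symm.trans_le (Submodule.span_le.2 ?_)
      rintro _ ⟨i, rfl⟩
      exact congrArg Subtype.val (congrFun x.2 i)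
    exact fun a ha => hle ha
  let ψ : LinearMap.ker φ →ₗ[R] annihilatedBy J I :=
    { toFun x := ⟨x, hker x⟩
      map_add' _ _ := rfl
      map_smul' _ _ := rfl }
  have : IsNoetherian R (LinearMap.ker φ) := isNoetherian_of_injective ψ fun x y h =>
    Subtype.ext (Subtype.ext (congrArg (fun z : annihilatedBy J I => (z : J)) h))
  exact isNoetherian_of_range_eq_ker (LinearMap.ker φ).subtype φ (LinearMap.ker φ).range_subtype

lemma isNoetherian_annihilatedBy_pow {I : Ideal A} [I.IsTwoSided] (hfg : I.FG)
    (hI : IsNoetherian R (annihilatedBy J I)) (n : ℕ) :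
    IsNoetherian R (annihilatedBy J (I ^ n)) := by
  induction n with
  | zero =>
    have hbot : annihilatedBy J (I ^ 0) = ⊥ := eq_bot_iff.2 fun x hx => by
      simpa using hx 1 (by rw [Submodule.pow_zero, Ideal.one_eq_top]; exact Submodule.mem_top)
    rw [hbot]
    infer_instance
  | succ n ih =>
    simp only [Submodule.pow_succ]
    exact isNoetherian_annihilatedBy_mul R hfg hI ih

end Annihilated

section FiniteInjective

variable {A : Type u} [Ring A]

lemma finite_of_isEssentialIn_top (R : Type*) [CommRing R] [IsArtinianRing R] [Algebra R A]
    [Module.Finite R A] {J : Type*} [AddCommGroup J] [Module A J]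
    (M : Submodule A J) [Module.Finite A M] (hM : IsEssentialIn M ⊤) : Module.Finite A J := by
  let : Module R J := Module.compHom J (algebraMap R A)
  have : IsScalarTower R A J := ⟨fun r a x => by rw [Algebra.smul_def, mul_smul]; rfl⟩
  have := IsArtinianRing.of_finite R A
  have : Module.Finite R M := .trans A M
  have := isSemisimpleModule_annihilatedBy_jacobson (A := A) J
  have hsoc : annihilatedBy J (Ring.jacobson A) ≤ M := le_of_isEssentialIn_top hM
  have hsocN : IsNoetherian R (annihilatedBy J (Ring.jacobson A)) :=
    isNoetherian_of_injective ((Submodule.inclusion hsoc).restrictScalars R)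
      (Submodule.inclusion_injective hsoc)
  obtain ⟨n, hn⟩ := IsSemiprimaryRing.isNilpotent (R := A)
  have htop : annihilatedBy J (Ring.jacobson A ^ n) = ⊤ :=
    eq_top_iff.2 fun x _ a ha => by
      rw [hn, Ideal.zero_eq_bot, Ideal.mem_bot] at ha
      rw [ha, zero_smul]
  have hJ := isNoetherian_annihilatedBy_pow R (IsNoetherian.noetherian _) hsocN n
  rw [htop] at hJ
  have : IsNoetherian A J := isNoetherian_top_iff.1 (isNoetherian_of_tower R hJ)
  infer_instance

lemma exists_finite_injective (R : Type*) [CommRing R] [IsArtinianRing R] [Algebra R A]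
    [Module.Finite R A] (M : ModuleCat.{u} A) [Module.Finite A M] :
    ∃ (J : ModuleCat.{u} A) (f : M →ₗ[A] J), Module.Finite A J ∧ Module.Injective A J ∧
      Function.Injective f := by
  obtain ⟨J, f, hJ, hf, hess⟩ := exists_injective_isEssentialIn_range M
  exact ⟨J, f, finite_of_isEssentialIn_top R (LinearMap.range f) hess, hJ, hf⟩

end FiniteInjective

section Coresolutions

variable {A : Type u} [Ring A]

/-- `L` has a finite coresolution `0 → L → C⁰ → ⋯ → Cⁿ → 0` with all `Cⁱ` in `ω`, presented as a
splice of short exact sequences so that arguments on coresolutions become inductions. -/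
inductive FinCoresolved (ω : ModuleCat.{u} A → Prop) : ModuleCat.{u} A → Prop
  | base (M : ModuleCat.{u} A) : ω M → FinCoresolved ω M
  | step {M Y X : ModuleCat.{u} A} (f : M →ₗ[A] Y) (g : Y →ₗ[A] X) :
      ShortExact f g → ω Y → FinCoresolved ω X → FinCoresolved ω M

variable {T L M Y X : ModuleCat.{u} A}

lemma ShortExact.id_zero (M Z : ModuleCat.{u} A) [Subsingleton Z] :
    ShortExact (LinearMap.id : M →ₗ[A] M) (0 : M →ₗ[A] Z) :=
  ⟨Function.injective_id, fun x => by simp, fun z => ⟨0, Subsingleton.elim _ z⟩⟩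

lemma HasAddCoresolution.finCoresolved (h : HasAddCoresolution T L) :
    FinCoresolved (InAddOf fun N => N = T) L := by
  obtain ⟨C, d, f, hf, hfd, hd, hC, m, hm⟩ := h
  induction m generalizing L C with
  | zero =>
    have := hm 0 le_rfl
    have : Subsingleton L := hf.subsingleton
    exact .base L .of_subsingleton
  | succ m ih =>
    have hX : Function.Exact (LinearMap.range (d 0)).subtype (d 1) := by
      rw [LinearMap.exact_iff, Submodule.range_subtype]
      exact (hd 0).linearMap_ker_eq
    have hL : Function.Exact f (d 0).rangeRestrict := by
      rw [LinearMap.exact_iff, LinearMap.ker_rangeRestrict]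
      exact hfd.linearMap_ker_eq
    exact .step (X := ModuleCat.of A (LinearMap.range (d 0))) f (d 0).rangeRestrict
      ⟨hf, hL, LinearMap.surjective_rangeRestrict _⟩ (hC 0)
      (ih (fun i => C (i + 1)) (fun i => d (i + 1)) (LinearMap.range (d 0)).subtype
        Subtype.val_injective hX (fun i => hd (i + 1)) (fun i => hC (i + 1))
        fun i hi => hm (i + 1) (by lia))

lemma ShortExact.hasAddCoresolution {f : M →ₗ[A] Y} {g : Y →ₗ[A] X} (h : ShortExact f g)
    (hY : InAddOf (fun N => N = T) Y) (hX : HasAddCoresolution T X) : HasAddCoresolution T M := by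
  obtain ⟨C, d, f', hf, hfd, hd, hC, m, hm⟩ := hX
  refine ⟨fun | 0 => Y | i + 1 => C i, fun | 0 => f' ∘ₗ g | i + 1 => d i, f, h.1,
    fun x => ?_, ?_, ?_, m + 1, ?_⟩
  · rw [← h.2.1 x]
    exact map_eq_zero_iff f' hf
  · rintro (_ | i) x
    · change d 0 x = 0 ↔ x ∈ Set.range (f' ∘ g)
      rw [h.2.2.range_comp f']
      exact hfd x
    · exact hd i x
  · rintro (_ | i)
    · exact hY
    · exact hC i
  · rintro (_ | i) hi
    · lia
    · exact hm i (by lia)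

lemma hasAddCoresolution_of_subsingleton [Subsingleton L] : HasAddCoresolution T L :=
  ⟨fun _ => L, fun _ => 0, LinearMap.id, Function.injective_id,
    fun _ => ⟨fun _ => ⟨0, Subsingleton.elim _ _⟩, fun _ => rfl⟩,
    fun _ _ => ⟨fun _ => ⟨0, Subsingleton.elim _ _⟩, fun _ => rfl⟩,
    fun _ => .of_subsingleton, 0, fun _ _ => inferInstance⟩

lemma FinCoresolved.hasAddCoresolution (h : FinCoresolved (InAddOf fun N => N = T) L) :
    HasAddCoresolution T L := by
  induction h with
  | base M hM =>
    have : Subsingleton (ModuleCat.of A PUnit.{u + 1}) := inferInstanceAs (Subsingleton PUnit)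
    exact (ShortExact.id_zero M (ModuleCat.of A PUnit)).hasAddCoresolution hM
      hasAddCoresolution_of_subsingleton
  | step f g hfg hY _ ih => exact hfg.hasAddCoresolution hY ih

variable {ω : ModuleCat.{u} A → Prop}

lemma FinCoresolved.extVanish (h : FinCoresolved ω L) (hY : ∀ N, ω N → ExtVanish N Y) :
    ExtVanish L Y := by
  induction h with
  | base M hM => exact hY M hM
  | step f g hfg hE _ ih =>
    exact fun i hi =>
      hfg.subsingleton_ext_contravariant₁ Y hi (hY _ hE i hi) (ih (i + 1) (by lia))

lemma FinCoresolved.exists_comp_eq (h : FinCoresolved ω L) {W : ModuleCat.{u} A} {p : W →ₗ[A] Y}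
    (hp : IsRightApprox ω p) (hY : ∀ N, ω N → ExtVanish N Y) (u : L →ₗ[A] Y) :
    ∃ v : L →ₗ[A] W, p ∘ₗ v = u := by
  cases h with
  | base _ hL => exact hp.2 L hL u
  | step f g hfg hE hX =>
    obtain ⟨u', hu'⟩ := hfg.exists_extend (hX.extVanish hY 1 one_pos) u
    obtain ⟨v, hv⟩ := hp.2 _ hE u'
    exact ⟨v ∘ₗ f, by rw [← LinearMap.comp_assoc, hv, hu']⟩

lemma IsRightApprox.surjective_of_finCoresolved {W : ModuleCat.{u} A} {p : W →ₗ[A] Y}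
    (hp : IsRightApprox ω p) (hA : FinCoresolved ω (ModuleCat.of A A))
    (hY : ∀ N, ω N → ExtVanish N Y) : Function.Surjective p := fun y => by
  obtain ⟨v, hv⟩ := hA.exists_comp_eq hp hY (LinearMap.toSpanSingleton A Y y)
  exact ⟨v (1 : A), (LinearMap.congr_fun hv (1 : A)).trans (LinearMap.toSpanSingleton_apply_one ..)⟩

lemma IsRightApprox.extVanish_of_shortExact {K W N : ModuleCat.{u} A} {f : K →ₗ[A] W}
    {p : W →ₗ[A] Y} (hp : IsRightApprox ω p) (h : ShortExact f p) (hN : ω N)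
    (hW : ExtVanish N W) (hY : ExtVanish N Y) : ExtVanish N K := by
  intro i hi
  obtain ⟨i, rfl⟩ := Nat.exists_eq_add_one.2 hi
  rcases Nat.eq_zero_or_pos i with rfl | hi'
  · exact h.subsingleton_ext_one_of_forall_lift N (hW 1 one_pos) (hp.2 N hN)
  · exact h.subsingleton_ext_covariant₁ N hi' (hY i hi') (hW _ hi)

end Coresolutions

section TiltingApproximations

variable {A : Type u} [Ring A]

lemma InAddOf.exists_comp_eq {X : ModuleCat.{u} A → Prop} {M W Y : ModuleCat.{u} A}
    (hM : InAddOf X M) {p : W →ₗ[A] Y}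
    (hp : ∀ N, X N → ∀ u : N →ₗ[A] Y, ∃ v : N →ₗ[A] W, p ∘ₗ v = u) (u : M →ₗ[A] Y) :
    ∃ v : M →ₗ[A] W, p ∘ₗ v = u := by
  obtain ⟨k, F, s, r, hF, hid⟩ := hM.exists_sum
  choose v hv using fun i => hp _ (hF i) (u ∘ₗ r i)
  refine ⟨∑ i, v i ∘ₗ s i, ?_⟩
  calc p ∘ₗ ∑ i, v i ∘ₗ s i = ∑ i, (p ∘ₗ v i) ∘ₗ s i := by ext; simp
    _ = u ∘ₗ ∑ i, r i ∘ₗ s i := by ext; simp [hv]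
    _ = u := by rw [hid, LinearMap.comp_id]

lemma finite_linearMap (R : Type*) [CommRing R] [IsNoetherianRing R] [Algebra R A]
    [Module.Finite R A] (T Y : Type*) [AddCommGroup T] [AddCommGroup Y] [Module A T] [Module A Y]
    [Module R Y] [IsScalarTower R A Y] [SMulCommClass A R Y] [Module.Finite A T]
    [Module.Finite A Y] : Module.Finite R (T →ₗ[A] Y) := by
  have : Module.Finite R Y := .trans A Y
  obtain ⟨n, t, ht⟩ := Module.Finite.exists_fin (R := A) (M := T)
  let ev : (T →ₗ[A] Y) →ₗ[R] Fin n → Y :=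
    { toFun h i := h (t i)
      map_add' _ _ := rfl
      map_smul' _ _ := rfl }
  have hev : Function.Injective ev := fun h h' hh =>
    LinearMap.ext_on_range ht fun i => congrFun hh i
  exact Module.Finite.of_injective ev hev

lemma contravariantlyFinite_inAddOf_eq (R : Type*) [CommRing R] [IsNoetherianRing R] [Algebra R A]
    [Module.Finite R A] (T : ModuleCat.{u} A) [Module.Finite A T] :
    ContravariantlyFinite (InAddOf fun N => N = T) := by
  intro Y _
  let : Module R Y := Module.compHom Y (algebraMap R A)
  have : IsScalarTower R A Y := ⟨fun r a x => by rw [Algebra.smul_def, mul_smul]; rfl⟩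
  let : Module R T := Module.compHom T (algebraMap R A)
  have : IsScalarTower R A T := ⟨fun r a x => by rw [Algebra.smul_def, mul_smul]; rfl⟩
  have := finite_linearMap R (A := A) T Y
  obtain ⟨m, b, hb⟩ := Module.Finite.exists_fin (R := R) (M := T →ₗ[A] Y)
  let F (_ : ULift.{u} (Fin m)) : ModuleCat.{u} A := T
  let p : ModuleCat.of A (DirectSum _ fun i => F i) →ₗ[A] Y :=
    DirectSum.toModule A _ Y fun i => b i.down
  refine ⟨_, p, .directSum fun _ => rfl, fun M hM => hM.exists_comp_eq ?_⟩
  rintro _ rfl u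
  obtain ⟨c, rfl⟩ := (Submodule.mem_span_range_iff_exists_fun R).1 (hb ▸ Submodule.mem_top : u ∈ _)
  refine ⟨∑ i, DirectSum.lof A _ (fun i => F i) ⟨i⟩ ∘ₗ (c i • LinearMap.id : _ →ₗ[A] F ⟨i⟩), ?_⟩
  ext x
  simp [p]

variable (R : Type*) [CommRing R] [IsArtinianRing R] [Algebra R A] [Module.Finite R A]
  {T : ModuleCat.{u} A}

include R

lemma exists_shortExact_inAddOf_eq (hTf : Module.Finite A T) (hTT : ExtVanish T T)
    (hA : FinCoresolved (InAddOf fun N => N = T) (ModuleCat.of A A))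
    (Y : ModuleCat.{u} A) [Module.Finite A Y] (hY : ExtVanish T Y) :
    ∃ (Y' W : ModuleCat.{u} A) (f : Y' →ₗ[A] W) (g : W →ₗ[A] Y), ShortExact f g ∧
      InAddOf (fun N => N = T) W ∧ ExtVanish T Y' := by
  obtain ⟨W, p, hp⟩ := contravariantlyFinite_inAddOf_eq R T Y inferInstance
  have hsurj := hp.surjective_of_finCoresolved hA fun N hN =>
    hN.extVanish_left fun K hK => hK ▸ hY
  have hs := ShortExact.of_surjective p hsurj
  exact ⟨_, W, _, p, hs, hp.1, hp.extVanish_of_shortExact hs (.of_mem rfl)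
    (hp.1.extVanish_right fun K hK => hK ▸ hTT) hY⟩

lemma ExtInjInP.inPerpOf_of_extVanish (hT : ExtInjInP T)
    (hA : FinCoresolved (InAddOf fun N => N = T) (ModuleCat.of A A))
    (Y : ModuleCat.{u} A) [Module.Finite A Y] (hY : ExtVanish T Y) : InPerpOf InP Y := by
  have := IsArtinianRing.of_finite R A
  intro N hN
  obtain ⟨d, hd⟩ := hN.2
  have key (k : ℕ) : ∀ Y : ModuleCat.{u} A, Module.Finite A Y → ExtVanish T Y →
      ∀ i, 0 < i → d < i + k → Subsingleton (ext N Y i) := by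
    induction k with
    | zero => exact fun Y _ _ i _ hdi => hd i hdi Y
    | succ k ih =>
      intro Y _ hY i hi hdi
      obtain ⟨Y', W, f, g, hfg, hW, hY'⟩ :=
        exists_shortExact_inAddOf_eq R hT.1.1 (hT.inPerpOf T hT.1) hA Y hY
      have := hW.finite fun N hN => hN ▸ hT.1.1
      exact hfg.subsingleton_ext_covariant₃ N hi
        (hW.extVanish_right (fun K hK => hK ▸ hT.inPerpOf N hN) i hi)
        (ih Y' (.of_injective f hfg.1) hY' (i + 1) (by lia) (by lia))
  exact fun i hi => key d Y inferInstance hY i hi (by lia)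

lemma ExtInjInP.exists_shortExact_extVanish (hT : ExtInjInP T)
    (hA : FinCoresolved (InAddOf fun N => N = T) (ModuleCat.of A A)) (k : ℕ)
    (K : ModuleCat.{u} A) [Module.Finite A K] (hK : ∀ i, k < i → Subsingleton (ext T K i)) :
    ∃ (W Z : ModuleCat.{u} A) (f : K →ₗ[A] W) (g : W →ₗ[A] Z), ShortExact f g ∧
      ExtVanish T W ∧ InP Z := by
  have := IsArtinianRing.of_finite R A
  induction k generalizing K with
  | zero =>
    have : Subsingleton (ModuleCat.of A PUnit.{u + 1}) := inferInstanceAs (Subsingleton PUnit)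
    exact ⟨K, ModuleCat.of A PUnit, _, _, .id_zero K _, hK, InAddOf.of_subsingleton.inP⟩
  | succ k ih =>
    obtain ⟨I, i, _, _, hi⟩ := exists_finite_injective R K
    have hKI := ShortExact.of_injective i hi
    have hI {j : ℕ} (hj : 0 < j) := subsingleton_ext_of_injective T I hj
    obtain ⟨Y, X, a, b, hab, hY, hX⟩ := ih (ModuleCat.of A (I ⧸ LinearMap.range i)) fun j hj =>
      hKI.subsingleton_ext_covariant₃ T (by lia) (hI (by lia)) (hK (j + 1) (by lia))
    have := hX.1
    have : Module.Finite A Y := .of_exact hab.2.1 hab.2.2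
    obtain ⟨Y', V, f, g, hfg, hV, hY'⟩ :=
      exists_shortExact_inAddOf_eq R hT.1.1 (hT.inPerpOf T hT.1) hA Y hY
    have sqZ := IsPullback.of_hasPullback (ModuleCat.ofHom g) (ModuleCat.ofHom a)
    obtain ⟨f', hZ, -⟩ := hfg.exists_of_isPullback sqZ
    have hZP : InP _ := resolving_inP.2.2 _ _ _ _ _ (hab.comp_of_isPullback hfg.2.2 sqZ)
      (hV.trans fun N hN => .of_mem (hN ▸ hT.1)).inP hX
    have sqW := IsPullback.of_hasPullback (ModuleCat.ofHom (LinearMap.range i).mkQ)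
      (ModuleCat.ofHom (Limits.pullback.snd (ModuleCat.ofHom g) (ModuleCat.ofHom a)).hom)
    obtain ⟨f'', hW, -⟩ := hKI.exists_of_isPullback sqW
    obtain ⟨k', hk', -⟩ := hZ.exists_of_isPullback sqW.flip
    exact ⟨_, _, f'', _, hW, fun l hl =>
      hk'.subsingleton_ext_covariant₂ T hl (hY' l hl) (hI hl), hZP⟩

theorem ExtInjInP.contravariantlyFinite_inP (hT : ExtInjInP T)
    (hA : FinCoresolved (InAddOf fun N => N = T) (ModuleCat.of A A)) :
    ContravariantlyFinite (InP (A := A)) := by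
  have := IsArtinianRing.of_finite R A
  intro M hM
  obtain ⟨K, Q, f, g, hfg, hQ, hQp⟩ := exists_projective_presentation M
  have : Module.Finite A K := .of_injective f hfg.1
  obtain ⟨n, hn⟩ := hT.1.2
  obtain ⟨W, Z, a, b, hab, hW, hZ⟩ := hT.exists_shortExact_extVanish R hA n K fun i hi => hn i hi K
  have := hZ.1
  have : Module.Finite A W := .of_exact hab.2.1 hab.2.2
  have sq := IsPushout.of_hasPushout (ModuleCat.ofHom f) (ModuleCat.ofHom a)
  obtain ⟨g', hB, -⟩ := hfg.exists_of_isPushout sq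
  obtain ⟨q, hq, -⟩ := hab.exists_of_isPushout sq.flip
  exact ⟨_, g', resolving_inP.2.1 _ _ _ _ _ hq (resolving_inP.1 Q hQ hQp) hZ, fun Y hY u =>
    hB.exists_lift (hT.inPerpOf_of_extVanish R hA W hW Y hY 1 one_pos) u⟩

end TiltingApproximations

section MinimalApproximations

variable {A : Type u} [Ring A] {X : ModuleCat.{u} A → Prop} {M N XM : ModuleCat.{u} A}

lemma comp_pow_eq {f : XM →ₗ[A] M} {g : Module.End A XM} (h : f ∘ₗ g = f) (n : ℕ) :
    f ∘ₗ (g ^ n) = f := by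
  induction n with
  | zero => rfl
  | succ n ih => rw [pow_succ', Module.End.mul_eq_comp, ← LinearMap.comp_assoc, h, ih]

lemma IsRightApprox.comp_subtype_range {f : XM →ₗ[A] M} (hf : IsRightApprox X f)
    (hX : ∀ M N, IsSummand M N → X N → X M) {g : XM →ₗ[A] XM} (hg : f ∘ₗ g = f)
    (hs : IsSummand (ModuleCat.of A (LinearMap.range g)) XM) :
    IsRightApprox X (XM := ModuleCat.of A (LinearMap.range g))
      (f ∘ₗ (LinearMap.range g).subtype) := by
  refine ⟨hX _ _ hs hf.1, fun Y hY u => ?_⟩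
  obtain ⟨v, rfl⟩ := hf.2 Y hY u
  exact ⟨g.rangeRestrict ∘ₗ v, LinearMap.ext fun y => LinearMap.congr_fun hg (v y)⟩

-- An approximation of minimal length is minimal, by Fitting's lemma.
lemma IsRightApprox.exists_isMinimalRightApprox [IsArtinianRing A]
    (hfg : ∀ N, X N → Module.Finite A N) (hX : ∀ M N, IsSummand M N → X N → X M)
    {f : XM →ₗ[A] M} (hf : IsRightApprox X f) :
    ∃ (X' : ModuleCat.{u} A) (f' : X' →ₗ[A] M), IsMinimalRightApprox X f' := by
  induction hl : Module.length A XM using WellFoundedLT.induction generalizing XM with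
  | ind l ih =>
  subst hl
  have := hfg _ hf.1
  by_cases hmin : IsMinimalRightApprox X f
  · exact ⟨XM, f, hmin⟩
  obtain ⟨g, hg, hbij⟩ : ∃ g : Module.End A XM, f ∘ₗ g = f ∧ ¬ Function.Bijective g := by
    simpa [IsMinimalRightApprox, hf] using hmin
  obtain ⟨n, hn⟩ := Filter.eventually_atTop.1 (LinearMap.eventually_isCompl_ker_pow_range_pow g)
  have fitting := (hn (n + 1) (by lia)).symm
  have hs : IsSummand (ModuleCat.of A (LinearMap.range (g ^ (n + 1)))) XM :=
    ⟨(LinearMap.range (g ^ (n + 1))).subtype, Submodule.projectionOnto _ _ fitting,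
      LinearMap.ext (Submodule.projectionOnto_apply_left fitting)⟩
  refine ih _ (Submodule.length_lt fun htop => hbij ?_)
    (hf.comp_subtype_range hX (comp_pow_eq hg (n + 1)) hs) rfl
  refine IsNoetherian.bijective_of_surjective_endomorphism g
    (Function.Surjective.of_comp (g := ⇑(g ^ n)) ?_)
  rw [← LinearMap.coe_comp, ← Module.End.mul_eq_comp, ← pow_succ']
  exact LinearMap.range_eq_top.1 htop

/-- **Wakamatsu's lemma**. -/
theorem IsMinimalRightApprox.subsingleton_ext_one_ker
    (hX : ∀ (M₁ M₂ M₃ : ModuleCat.{u} A) (f : M₁ →ₗ[A] M₂) (g : M₂ →ₗ[A] M₃),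
      ShortExact f g → X M₁ → X M₃ → X M₂)
    {f : XM →ₗ[A] M} (hf : IsMinimalRightApprox X f) [Module.Finite A N] (hN : X N) :
    Subsingleton (ext N (ModuleCat.of A (LinearMap.ker f)) 1) := by
  obtain ⟨K, Q, a, b, hab, -, hQp⟩ := exists_projective_presentation N
  refine hab.subsingleton_ext_one_of_forall_extend _ (subsingleton_ext_of_projective Q _ one_pos)
    fun u => ?_
  let i : ModuleCat.of A (LinearMap.ker f) →ₗ[A] XM := (LinearMap.ker f).subtype
  have sq := IsPushout.of_hasPushout (ModuleCat.ofHom a) (ModuleCat.ofHom (i ∘ₗ u))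
  let j := (Limits.pushout.inl (ModuleCat.ofHom a) (ModuleCat.ofHom (i ∘ₗ u))).hom
  let k := (Limits.pushout.inr (ModuleCat.ofHom a) (ModuleCat.ofHom (i ∘ₗ u))).hom
  obtain ⟨g', hB, -⟩ := hab.exists_of_isPushout sq
  obtain ⟨c, hcj, hck⟩ := exists_linearMap_of_isPushout sq 0 f (by ext x; simp [i])
  obtain ⟨h, rfl⟩ := hf.1.2 _ (hX _ _ _ _ _ hB hf.1.1 hN) c
  let e : XM ≃ₗ[A] XM := LinearEquiv.ofBijective (h ∘ₗ k) (hf.2 _ hck)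
  have he (x : XM) : f (e.symm x) = f x := by
    obtain ⟨y, rfl⟩ := e.surjective x
    rw [e.symm_apply_apply]
    exact (LinearMap.congr_fun hck y).symm
  refine ⟨(e.symm.toLinearMap ∘ₗ h ∘ₗ j).codRestrict _ fun q => ?_, ?_⟩
  · exact (he _).trans (LinearMap.congr_fun hcj q)
  · have hja : j ∘ₗ a = k ∘ₗ i ∘ₗ u := congrArg ModuleCat.Hom.hom sq.w
    refine LinearMap.ext fun x => Subtype.ext ((e.symm_apply_eq).2 ?_)
    exact congrArg h (LinearMap.congr_fun hja x)

end MinimalApproximations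

section SpecialApproximations

variable {A : Type u} [Ring A] {M N : ModuleCat.{u} A}

/-- `M` has a special right `𝒫`-approximation of projective dimension at most `n`: a short exact
sequence `0 → Y → X → M → 0` with `Y ∈ 𝒫^⊥`, `X ∈ 𝒫` and `X` of projective dimension at most `n`. -/
def HasSpecialApprox (n : ℕ) (M : ModuleCat.{u} A) : Prop :=
  ∃ (Y X : ModuleCat.{u} A) (f : Y →ₗ[A] X) (g : X →ₗ[A] M),
    ShortExact f g ∧ InPerpOf InP Y ∧ InP X ∧ pdLE X n

lemma HasSpecialApprox.mono {m n : ℕ} (h : HasSpecialApprox m M) (hmn : m ≤ n) :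
    HasSpecialApprox n M := by
  obtain ⟨Y, X, f, g, hfg, hY, hX, hd⟩ := h
  exact ⟨Y, X, f, g, hfg, hY, hX, hd.mono hmn⟩

lemma HasSpecialApprox.of_equiv {n : ℕ} (h : HasSpecialApprox n M) (e : M ≃ₗ[A] N) :
    HasSpecialApprox n N := by
  obtain ⟨Y, X, f, g, ⟨hf, hfg, hg⟩, hY, hX, hd⟩ := h
  refine ⟨Y, X, f, e.toLinearMap ∘ₗ g, ⟨hf, fun x => ?_, e.surjective.comp hg⟩, hY, hX, hd⟩
  exact e.map_eq_zero_iff.trans (hfg x)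

lemma hasSpecialApprox_of_subsingleton (n : ℕ) [Subsingleton M] : HasSpecialApprox n M :=
  have hM : InAddOf (fun _ => False) M := .of_subsingleton
  have hd : pdLE M n := fun _ hi Z =>
    hM.subsingleton_ext_left Z (Nat.zero_lt_of_lt hi) fun _ h => h.elim
  ⟨M, M, LinearMap.id, 0, .id_zero M M, fun _ _ => hM.extVanish_right fun _ h => h.elim,
    ⟨inferInstance, n, hd⟩, hd⟩

lemma HasSpecialApprox.pdLE {n : ℕ} (h : HasSpecialApprox n M) (hM : InP M) : pdLE M n := by
  obtain ⟨Y, X, f, g, hfg, hY, -, hd⟩ := h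
  obtain ⟨s, hs⟩ := hfg.exists_lift (hY M hM 1 one_pos) LinearMap.id
  exact fun i hi Z => (InAddOf.of_isSummand (X := (· = X)) ⟨s, g, hs⟩ rfl).subsingleton_ext_left Z
    (Nat.zero_lt_of_lt hi) fun _ h => h ▸ hd i hi Z

variable {B X₁ X X₃ Y₁ M₁ : ModuleCat.{u} A} {i : M₁ →ₗ[A] B} {p : B →ₗ[A] X₃}
  {a : Y₁ →ₗ[A] X₁} {b : X₁ →ₗ[A] M₁}

-- The obstruction to lifting the class of `0 → M₁ → B → X₃ → 0` along `b` lies in `Ext²(X₃, Y₁)`.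
lemma ShortExact.exists_shortExact_of_subsingleton_ext_two [Module.Finite A X₃]
    (hB : ShortExact i p) (hab : ShortExact a b) (hY : Subsingleton (ext X₃ Y₁ 2)) :
    ∃ (X : ModuleCat.{u} A) (f : X₁ →ₗ[A] X) (c : X →ₗ[A] B),
      ShortExact f (p ∘ₗ c) ∧ c ∘ₗ f = i ∘ₗ b := by
  obtain ⟨K, Q, s, t, hst, -, hQ⟩ := exists_projective_presentation X₃
  obtain ⟨v, hv⟩ := hB.exists_lift (subsingleton_ext_of_projective Q M₁ one_pos) t
  obtain ⟨w, hw⟩ := hB.exists_factor (v ∘ₗ s) (by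
    rw [← LinearMap.comp_assoc, hv, hst.comp_eq_zero])
  obtain ⟨w', rfl⟩ := hab.exists_lift (hst.subsingleton_ext_contravariant₁ Y₁ one_pos
    (subsingleton_ext_of_projective Q Y₁ one_pos) hY) w
  have sq := IsPushout.of_hasPushout (ModuleCat.ofHom s) (ModuleCat.ofHom w')
  obtain ⟨g, hfg, hg⟩ := hst.exists_of_isPushout sq
  obtain ⟨c, hcv, hcb⟩ := exists_linearMap_of_isPushout sq v (i ∘ₗ b) hw.symm
  have hpc : p ∘ₗ c = g := by
    refine linearMap_ext_of_isPushout sq ?_ ?_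
    · rw [LinearMap.comp_assoc, hcv, hv, hg]
    · rw [LinearMap.comp_assoc, hcb, ← LinearMap.comp_assoc, hB.comp_eq_zero, hfg.comp_eq_zero,
        LinearMap.zero_comp]
  exact ⟨_, _, c, hpc ▸ hfg, hcb⟩

lemma ShortExact.comp_of_comp_eq (hB : ShortExact i p) (hab : ShortExact a b)
    {f : X₁ →ₗ[A] X} {c : X →ₗ[A] B} (hX : ShortExact f (p ∘ₗ c)) (hcf : c ∘ₗ f = i ∘ₗ b) :
    ShortExact (f ∘ₗ a) c := by
  have hcf' (y : X₁) : c (f y) = i (b y) := LinearMap.congr_fun hcf y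
  refine ⟨hX.1.comp hab.1, fun x => ⟨fun hx => ?_, ?_⟩, fun y => ?_⟩
  · obtain ⟨y, rfl⟩ := (hX.2.1 x).1 ((congrArg p hx).trans (map_zero p))
    have hby : b y = 0 := hB.1 (by rw [← hcf', hx, map_zero])
    obtain ⟨z, rfl⟩ := (hab.2.1 y).1 hby
    exact ⟨z, rfl⟩
  · rintro ⟨z, rfl⟩
    rw [LinearMap.comp_apply, hcf', hab.2.1.apply_apply_eq_zero, map_zero]
  · obtain ⟨x, hx⟩ := hX.2.2 (p y)
    obtain ⟨m, hm⟩ := (hB.2.1 (y - c x)).1 (by rw [map_sub, ← hx, LinearMap.comp_apply, sub_self])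
    obtain ⟨z, rfl⟩ := hab.2.2 m
    exact ⟨f z + x, by rw [map_add, hcf', hm, sub_add_cancel]⟩

-- With `0 → Yⱼ → Xⱼ → Mⱼ → 0` given for `j = 1, 3`, pull `M₂` back along `X₃ → M₃` to an extension
-- `B` of `X₃` by `M₁`, lift `B` to an extension `X` of `X₃` by `X₁`, and take `X → B → M₂`.
lemma ShortExact.hasSpecialApprox [IsNoetherianRing A] {n : ℕ} {M₂ M₃ : ModuleCat.{u} A}
    {f : M₁ →ₗ[A] M₂} {g : M₂ →ₗ[A] M₃} (h : ShortExact f g) (h₁ : HasSpecialApprox n M₁)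
    (h₃ : HasSpecialApprox n M₃) : HasSpecialApprox n M₂ := by
  obtain ⟨Y₁, X₁, a₁, b₁, hab₁, hY₁, hX₁, hd₁⟩ := h₁
  obtain ⟨Y₃, X₃, a₃, b₃, hab₃, hY₃, hX₃, hd₃⟩ := h₃
  have := hX₃.1
  have sqB := IsPullback.of_hasPullback (ModuleCat.ofHom g) (ModuleCat.ofHom b₃)
  obtain ⟨i, hB, -⟩ := h.exists_of_isPullback sqB
  obtain ⟨k, hk, -⟩ := hab₃.exists_of_isPullback sqB.flip
  obtain ⟨X, f', c, hX, hcf⟩ :=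
    hB.exists_shortExact_of_subsingleton_ext_two hab₁ (hY₁ X₃ hX₃ 2 two_pos)
  have hc := hB.comp_of_comp_eq hab₁ hX hcf
  have sqY := IsPullback.of_hasPullback (ModuleCat.ofHom c) (ModuleCat.ofHom k)
  obtain ⟨_, hY, -⟩ := hc.exists_of_isPullback sqY
  exact ⟨_, X, _, _, hk.comp_of_isPullback hc.2.2 sqY,
    fun N hN l hl => hY.subsingleton_ext_covariant₂ N hl (hY₁ N hN l hl) (hY₃ N hN l hl),
    resolving_inP.2.1 _ _ _ _ _ hX hX₁ hX₃, hX.pdLE₂ hd₁ hd₃⟩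

end SpecialApproximations

namespace ContravariantlyFinite

variable {A : Type u} [Ring A] [IsArtinianRing A]

lemma exists_hasSpecialApprox (hP : ContravariantlyFinite (InP (A := A)))
    (M : ModuleCat.{u} A) [Module.Finite A M] : ∃ n, HasSpecialApprox n M := by
  obtain ⟨_, _, hf₀⟩ := hP M ‹_›
  obtain ⟨X, f, hf⟩ := hf₀.exists_isMinimalRightApprox (fun _ hN => hN.1)
    fun _ _ hs hN => (InAddOf.of_isSummand hs hN).inP
  obtain ⟨n, hn⟩ := hf.1.1.2
  obtain ⟨K, Q, a, b, hab, hQ, hQp⟩ := exists_projective_presentation M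
  obtain ⟨v, hv⟩ := hf.1.2 Q (resolving_inP.1 Q hQ hQp) b
  have hsurj : Function.Surjective f := .of_comp (g := v) (by
    rw [← LinearMap.coe_comp, hv]; exact hab.2.2)
  refine ⟨n, _, X, _, f, .of_surjective f hsurj, ?_, hf.1.1, hn⟩
  exact resolving_inP.inPerpOf (fun _ hN => hN.1) fun N hN =>
    have := hN.1
    hf.subsingleton_ext_one_ker resolving_inP.2.1 hN

lemma exists_hasSpecialApprox_of_isFiniteLength (hP : ContravariantlyFinite (InP (A := A)))
    {M : Type u} [AddCommGroup M] [Module A M] (hM : IsFiniteLength A M) :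
    ∃ n, ∀ S : ModuleCat.{u} A, IsSimpleModule A S → (∃ h : M →ₗ[A] S, h ≠ 0) →
      HasSpecialApprox n S := by
  induction hM with
  | of_subsingleton => exact ⟨0, fun S _ ⟨h, hh⟩ => (hh (Subsingleton.elim _ _)).elim⟩
  | @of_simple_quotient M _ _ N _ _ ih =>
    obtain ⟨m, hm⟩ := ih
    obtain ⟨n, hn⟩ := hP.exists_hasSpecialApprox (ModuleCat.of A (M ⧸ N))
    refine ⟨max m n, fun S hS ⟨h, hh⟩ => ?_⟩
    by_cases hNh : h ∘ₗ N.subtype = 0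
    · have hle : N ≤ LinearMap.ker h := fun x hx => LinearMap.congr_fun hNh ⟨x, hx⟩
      have hne : N.liftQ h hle ≠ 0 := fun h0 => hh (by
        rw [← N.liftQ_mkQ h hle, h0, LinearMap.zero_comp])
      exact (hn.of_equiv (.ofBijective _ (LinearMap.bijective_of_ne_zero hne))).mono
        (le_max_right m n)
    · exact (hm S hS ⟨_, hNh⟩).mono (le_max_left m n)

lemma exists_forall_simple_hasSpecialApprox (hP : ContravariantlyFinite (InP (A := A))) :
    ∃ n, ∀ S : ModuleCat.{u} A, IsSimpleModule A S → HasSpecialApprox n S := by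
  obtain ⟨n, hn⟩ := hP.exists_hasSpecialApprox_of_isFiniteLength
    (isFiniteLength_iff_isNoetherian_isArtinian (R := A) (M := A) |>.2
      ⟨inferInstance, ‹_›⟩)
  refine ⟨n, fun S hS => hn S hS ?_⟩
  have := hS.nontrivial
  obtain ⟨x, hx⟩ := exists_ne (0 : S)
  exact ⟨LinearMap.toSpanSingleton A S x, fun h => hx (by simpa using LinearMap.congr_fun h 1)⟩

theorem exists_forall_hasSpecialApprox (hP : ContravariantlyFinite (InP (A := A))) :
    ∃ n, ∀ M : ModuleCat.{u} A, Module.Finite A M → HasSpecialApprox n M := by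
  obtain ⟨n, hn⟩ := hP.exists_forall_simple_hasSpecialApprox
  have hfl {M : Type u} [AddCommGroup M] [Module A M] (hM : IsFiniteLength A M) :
      HasSpecialApprox n (ModuleCat.of A M) := by
    induction hM with
    | of_subsingleton => exact hasSpecialApprox_of_subsingleton n
    | @of_simple_quotient M _ _ N _ _ ih =>
      exact ShortExact.hasSpecialApprox (M₁ := ModuleCat.of A N) (M₂ := ModuleCat.of A M)
        (M₃ := ModuleCat.of A (M ⧸ N))
        ⟨N.injective_subtype, LinearMap.exact_subtype_mkQ N, N.mkQ_surjective⟩ ih (hn _ ‹_›)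
  exact ⟨n, fun M _ => hfl (M := M)
    (isFiniteLength_iff_isNoetherian_isArtinian.2 ⟨inferInstance, inferInstance⟩)⟩

end ContravariantlyFinite

section ExtInjectiveCoresolutions

variable {A : Type u} [Ring A] {M N T : ModuleCat.{u} A}

lemma ExtInjInP.prod [IsNoetherianRing A] (hM : ExtInjInP M) (hN : ExtInjInP N) :
    ExtInjInP (ModuleCat.of A (M × N)) := by
  have h : ShortExact (M₂ := ModuleCat.of A (M × N)) (.inl A M N) (.snd A M N) :=
    ⟨LinearMap.inl_injective, Function.Exact.inl_snd, LinearMap.snd_surjective⟩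
  exact ⟨resolving_inP.2.1 _ _ _ _ _ h hM.1 hN.1,
    fun K hK => h.subsingleton_ext_covariant₂ K one_pos (hM.2 K hK) (hN.2 K hK)⟩

lemma FinCoresolved.mono {ω ω' : ModuleCat.{u} A → Prop} (h : FinCoresolved ω M)
    (hω : ∀ N, ω N → ω' N) : FinCoresolved ω' M := by
  induction h with
  | base M hM => exact .base M (hω M hM)
  | step f g hfg hY _ ih => exact .step f g hfg (hω _ hY) ih

lemma FinCoresolved.exists_extInjInP [IsNoetherianRing A] (h : FinCoresolved ExtInjInP M) :
    ∃ T : ModuleCat.{u} A, ExtInjInP T ∧ FinCoresolved (InAddOf fun N => N = T) M := by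
  induction h with
  | base M hM => exact ⟨M, hM, .base M (.of_mem rfl)⟩
  | @step M Y X f g hfg hY _ ih =>
    obtain ⟨T, hT, hX⟩ := ih
    have hYs : IsSummand Y (ModuleCat.of A (Y × T)) :=
      ⟨.inl A Y T, .fst A Y T, LinearMap.fst_comp_inl A Y T⟩
    have hTs : IsSummand T (ModuleCat.of A (Y × T)) :=
      ⟨.inr A Y T, .snd A Y T, LinearMap.snd_comp_inr A Y T⟩
    refine ⟨ModuleCat.of A (Y × T), hY.prod hT, .step f g hfg (.of_isSummand hYs rfl) ?_⟩
    refine hX.mono fun N hN => hN.trans ?_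
    rintro _ rfl
    exact .of_isSummand hTs rfl

variable (R : Type u) [CommRing R] [IsArtinianRing R] [Algebra R A] [Module.Finite R A]

include R

-- Embed `M` in an injective module `I` and let `0 → Y₀ → X → I / M → 0` be a special approximation.
-- Pulling `I → I / M` back along `X → I / M` gives the first step `0 → M → Y → X → 0`.
lemma ContravariantlyFinite.finCoresolved_extInjInP_of_subsingleton_ext
    (hP : ContravariantlyFinite (InP (A := A))) (k : ℕ) (hM : InP M)
    (hk : ∀ N, InP N → ∀ i, k < i → Subsingleton (ext N M i)) : FinCoresolved ExtInjInP M := by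
  have := IsArtinianRing.of_finite R A
  induction k generalizing M with
  | zero => exact .base M ⟨hM, fun N hN => hk N hN 1 one_pos⟩
  | succ k ih =>
    have := hM.1
    obtain ⟨I, e, hIf, hI, he⟩ := exists_finite_injective R M
    have hMI := ShortExact.of_injective e he
    obtain ⟨n, Y₀, X, a, b, hab, hY₀, hX, -⟩ :=
      hP.exists_hasSpecialApprox (ModuleCat.of A (I ⧸ LinearMap.range e))
    have sq := IsPullback.of_hasPullback (ModuleCat.ofHom (LinearMap.range e).mkQ)
      (ModuleCat.ofHom b)
    obtain ⟨f, hY, -⟩ := hMI.exists_of_isPullback sq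
    obtain ⟨c, hc, -⟩ := hab.exists_of_isPullback sq.flip
    have hYperp (N) (hN : InP N) : ExtVanish N _ := fun l hl =>
      hc.subsingleton_ext_covariant₂ N hl (hY₀ N hN l hl) (subsingleton_ext_of_injective N I hl)
    refine .step f _ hY ⟨resolving_inP.2.1 _ _ _ _ _ hY hM hX, fun N hN => hYperp N hN 1 one_pos⟩
      (ih hX fun N hN l hl => ?_)
    exact hY.subsingleton_ext_covariant₃ N (by lia) (hYperp N hN l (by lia))
      (hk N hN (l + 1) (by lia))

theorem ContravariantlyFinite.finCoresolved_extInjInP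
    (hP : ContravariantlyFinite (InP (A := A))) (hM : InP M) : FinCoresolved ExtInjInP M := by
  have := IsArtinianRing.of_finite R A
  obtain ⟨n, hn⟩ := hP.exists_forall_hasSpecialApprox
  exact hP.finCoresolved_extInjInP_of_subsingleton_ext R n hM fun N hN i hi =>
    (hn N hN.1).pdLE hN i hi M

lemma ExtInjInP.inAddOf_eq (hT : ExtInjInP T)
    (hA : FinCoresolved (InAddOf fun N => N = T) (ModuleCat.of A A)) (hM : ExtInjInP M) :
    InAddOf (fun N => N = T) M := by
  have := IsArtinianRing.of_finite R A
  have := hT.1.1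
  have := hM.1.1
  obtain ⟨Y, W, f, g, hfg, hW, hY⟩ := exists_shortExact_inAddOf_eq R hT.1.1
    (hT.inPerpOf T hT.1) hA M (hM.inPerpOf T hT.1)
  have := hW.finite fun N hN => hN ▸ hT.1.1
  have : Module.Finite A Y := .of_injective f hfg.1
  obtain ⟨s, hs⟩ := hfg.exists_lift (hT.inPerpOf_of_extVanish R hA Y hY M hM.1 1 one_pos)
    LinearMap.id
  exact (InAddOf.of_isSummand (X := (· = W)) ⟨s, g, hs⟩ rfl).trans fun _ h => h ▸ hW

end ExtInjectiveCoresolutions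

section CompleteFamilies

variable {A : Type u} [Ring A] {ι : Type u} {F : ι → ModuleCat.{u} A}

lemma finite_of_finite_directSum (hF : ∀ i, ¬ Subsingleton (F i))
    (h : Module.Finite A (DirectSum ι fun i => F i)) : Finite ι := by
  classical
  obtain ⟨n, s, hs⟩ := Module.Finite.exists_fin (R := A) (M := DirectSum ι fun i => F i)
  suffices h : ∀ i, ∃ j, i ∈ DFinsupp.support (s j) from
    Set.finite_univ_iff.1 ((Set.finite_iUnion fun j => (s j).support.finite_toSet).subset
      fun i _ => Set.mem_iUnion.2 (h i))
  intro i
  by_contra! hi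
  have hcomp : DirectSum.component A ι (fun i => F i) i = 0 :=
    LinearMap.ext_on_range hs fun j => DFinsupp.notMem_support_iff.1 (hi j)
  refine hF i (subsingleton_of_forall_eq 0 fun x => ?_)
  rw [← DirectSum.component.lof_self (M := fun i => F i) A i x, hcomp, LinearMap.zero_apply]

namespace IsCompleteExtInjFamily

lemma inAddOf [IsArtinianRing A] (hF : IsCompleteExtInjFamily F) {M : ModuleCat.{u} A}
    (hM : ExtInjInP M) : InAddOf (fun N => ∃ i, N = F i) M := by
  refine (inAddOf_indec_and (fun _ hN => hN.1.1)
    (fun _ _ hs hN => (InAddOf.of_isSummand hs hN).extInjInP) hM).trans fun N hN => ?_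
  obtain ⟨i, ⟨e⟩⟩ := hF.2.1 N hN.1 hN.2
  exact .of_isSummand (N := F i) ⟨e.toLinearMap, e.symm.toLinearMap, e.symm_comp⟩ ⟨i, rfl⟩

-- Each `F i` is a summand of a power of `T`, so by Krull–Schmidt it occurs in a decomposition
-- of `T`.
lemma finite [IsArtinianRing A] (hF : IsCompleteExtInjFamily F) {T : ModuleCat.{u} A}
    (hT : ExtInjInP T) (hadd : ∀ W, ExtInjInP W → InAddOf (fun N => N = T) W) : Finite ι := by
  obtain ⟨k, G, s, r, hG, hid⟩ := (hF.inAddOf hT).exists_sum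
  choose σ hσ using hG
  have hT' : InAddOf (fun N => ∃ j, N = F (σ j)) T := .of_sum (fun j => ⟨j, hσ j⟩) s r hid
  refine Finite.of_surjective σ fun i => ?_
  obtain ⟨hi, hi'⟩ := hF.1 i
  have := hi'.1.1
  obtain ⟨_, ⟨j, rfl⟩, e⟩ := hi.exists_equiv_of_inAddOf
    ((hadd _ hi').trans fun _ h => h ▸ hT') (by rintro _ ⟨j, rfl⟩; exact (hF.1 (σ j)).1)
  exact ⟨j, (hF.2.2 i (σ j) e).symm⟩

lemma extInjInP_directSum [Finite ι] (hF : IsCompleteExtInjFamily F) :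
    ExtInjInP (ModuleCat.of A (DirectSum ι fun i => F i)) :=
  (InAddOf.directSum fun i => (hF.1 i).2).extInjInP

variable (R : Type u) [CommRing R] [IsArtinianRing R] [Algebra R A] [Module.Finite R A]

include R

theorem isTilting_directSum (hF : IsCompleteExtInjFamily F)
    (hP : ContravariantlyFinite (InP (A := A))) :
    IsTilting (ModuleCat.of A (DirectSum ι fun i => F i)) := by
  have := IsArtinianRing.of_finite R A
  have hA : FinCoresolved ExtInjInP (ModuleCat.of A A) := hP.finCoresolved_extInjInP R
    (resolving_inP.1 _ (inferInstanceAs (Module.Finite A A))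
      (inferInstanceAs (Module.Projective A A)))
  obtain ⟨T, hT, hAT⟩ := hA.exists_extInjInP
  have := hF.finite hT fun W hW => hT.inAddOf_eq R hAT hW
  have hE := hF.extInjInP_directSum
  have hadd {M : ModuleCat.{u} A} (hM : ExtInjInP M) :
      InAddOf (fun N => N = ModuleCat.of A (DirectSum ι fun i => F i)) M :=
    (hF.inAddOf hM).trans <| by
      classical
      rintro _ ⟨i, rfl⟩
      exact .of_isSummand ⟨DirectSum.lof A ι (fun i => F i) i, DirectSum.component A ι _ i,
        LinearMap.ext fun x => DirectSum.component.lof_self (M := fun i => F i) A i x⟩ rfl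
  exact ⟨hE.1.1, hE.1.2, hE.inPerpOf _ hE.1, (hA.mono fun _ => hadd).hasAddCoresolution⟩

theorem contravariantlyFinite_of_isTilting (hF : IsCompleteExtInjFamily F)
    (hE : IsTilting (ModuleCat.of A (DirectSum ι fun i => F i))) :
    ContravariantlyFinite (InP (A := A)) := by
  have := finite_of_finite_directSum (fun i => (hF.1 i).1.1) hE.1
  exact hF.extInjInP_directSum.contravariantlyFinite_inP R hE.2.2.2.finCoresolved

end IsCompleteExtInjFamily

end CompleteFamilies

/-- `𝒫` is contravariantly finite iff the direct sum of a complete set of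
representatives of the indecomposable Ext-injective modules in `𝒫` is a tilting module. -/
theorem stmt_9 (Λ : Type u) [Ring Λ] (R : Type u) [CommRing R] [IsArtinianRing R]
    [Algebra R Λ] [Module.Finite R Λ]
    {ι : Type u} (F : ι → ModuleCat.{u} Λᵐᵒᵖ) (hF : IsCompleteExtInjFamily F) :
    ContravariantlyFinite (fun M : ModuleCat.{u} Λᵐᵒᵖ => InP M) ↔
      IsTilting (ModuleCat.of Λᵐᵒᵖ (DirectSum ι (fun i => ↥(F i)))) := by
  have : Module.Finite R Λᵐᵒᵖ := Module.Finite.equiv (MulOpposite.opLinearEquiv R)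
  exact ⟨hF.isTilting_directSum R, hF.contravariantlyFinite_of_isTilting R⟩
end
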